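/- arXiv:2507.03827 — 2 statements merged into one kernel-verified Lean document; each statement's English description precedes it below -/
import Mathlib

section
/- Let 𝒜₄ be the structure ({a,b}^ω ∪ {a,b}; a, b; head, tail; r₁) of signature (2;1,1;2), where {a,b}^ω is the set of all infinite sequences over a two-letter alphabet {a,b} (a ≠ b), r₁ = {(a,a),(b,b)}, head(v̄) = v₁ and tail(v̄) = (v₂,v₃,…) for v̄ = (v₁,v₂,…) ∈ {a,b}^ω, and head(x) = tail(x) = x for x ∈ {a,b}. Then the complement of the identity relation id on the universe is semi-decidable by a BSS RAM in M_{𝒜₄}, but id itself is not semi-decidable by any BSS RAM in M_{𝒜₄}: within finitely many steps a machine can compare only finite initial segments of two infinite sequences, so acceptance of an identical pair forces acceptance of some non-identical pair. -/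
/-!
The complement of the identity is accepted by an explicit program: a tuple whose length is not `2`
is accepted at once; for a pair, `r₁(x, x)` tells letters from sequences, two letters are compared
by `r₁`, a letter and a sequence are distinct, and two sequences are compared head by head, so that
the run stops at the first position where they differ. On a pair `(x, x)` the invariant `NeqInv`
holds along the whole run and excludes the stop label (`not_halts_of_inv`).

The identity itself is not semi-decidable because of a continuity argument. Call two elements
`k`-close (`Close k`) if they are the same letter or two sequences with the same first `k` entries.
`head` and `tail` map `(k+1)`-close elements to `k`-close ones, and `r₁` does not distinguish
`0`-close arguments. Hence a halting run with `t` steps is followed, label by label, by the run from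
every configuration whose registers are `t`-close (`halts_of_close`). A machine accepting
`(aaa…, aaa…)` therefore also accepts a pair `(aaa…, w)` where `w` has its only `b` at a large
position.
-/

/-!
A formalization of BSS RAMs over first-order structures (following C. Gaßner,
"Abstract computation over first-order structures", Part II b).

We model a first-order structure with indexed constants, operations and
relations, machines given by finite programs of labeled instructions
(including binary non-deterministic branching `orGoto` and Moschovakis'
`ν`-operator instructions `nuGuess`), configurations, the (non-deterministic)
transition relation, halting sets, semi-decidability and decidability, the
various non-deterministic machine classes and their result functions.
-/

/-- A first-order structure: a universe together with indexed constants,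
operations and relations. -/
structure FOStruct where
  U : Type
  constIdx : Type
  consts : constIdx → U
  opIdx : Type
  ops : opIdx → List U → U
  relIdx : Type
  rels : relIdx → List U → Prop

/-- `U^∞`: all finite nonempty tuples over the universe of `A`. -/
abbrev Tup (A : FOStruct) : Type := { l : List A.U // l ≠ [] }

/-- Instructions of BSS RAMs over `A`.  The first seven kinds are the
deterministic instruction types; `orGoto` is the binary non-deterministic
branching instruction `goto ℓ₁ or goto ℓ₂`; `nuGuess j` is a ν-oracle
instruction writing a non-deterministically chosen tuple of the oracle set
into the registers `Z_j, Z_{j+1}, …`. -/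
inductive Instr (A : FOStruct) : Type where
  | apply (j : ℕ) (i : A.opIdx) (args : List ℕ)
  | const (j : ℕ) (i : A.constIdx)
  | copy (j k : ℕ)
  | branchRel (i : A.relIdx) (args : List ℕ) (l₁ l₂ : ℕ)
  | branchIdx (j k l₁ l₂ : ℕ)
  | incIdx (j : ℕ)
  | resetIdx (j : ℕ)
  | orGoto (l₁ l₂ : ℕ)
  | nuGuess (j : ℕ)

/-- A configuration: current label, index registers, and `Z`-registers. -/
structure Config (A : FOStruct) where
  label : ℕ
  idx : ℕ → ℕ
  reg : ℕ → A.U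

/-- A machine: a finite program together with an oracle set (only used by
`nuGuess` instructions). -/
structure Machine (A : FOStruct) where
  prog : List (Instr A)
  oracle : Set (Tup A)

open scoped Classical in
/-- Execution of a deterministic instruction. -/
noncomputable def execDet {A : FOStruct} (ins : Instr A) (c : Config A) : Config A :=
  match ins with
  | .apply j i args =>
      { c with label := c.label + 1, reg := Function.update c.reg j (A.ops i (args.map c.reg)) }
  | .const j i =>
      { c with label := c.label + 1, reg := Function.update c.reg j (A.consts i) }
  | .copy j k =>
      { c with label := c.label + 1, reg := Function.update c.reg (c.idx j) (c.reg (c.idx k)) }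
  | .branchRel i args l₁ l₂ =>
      { c with label := if A.rels i (args.map c.reg) then l₁ else l₂ }
  | .branchIdx j k l₁ l₂ =>
      { c with label := if c.idx j = c.idx k then l₁ else l₂ }
  | .incIdx j =>
      { c with label := c.label + 1, idx := Function.update c.idx j (c.idx j + 1) }
  | .resetIdx j =>
      { c with label := c.label + 1, idx := Function.update c.idx j 1 }
  | .orGoto l₁ _ => { c with label := l₁ }
  | .nuGuess _ => { c with label := c.label + 1 }

/-- Write the components of the list `l` into the registers `j, j+1, …`. -/
def writeFrom {A : FOStruct} (reg : ℕ → A.U) (j : ℕ) (l : List A.U) : ℕ → A.U :=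
  fun i => if j ≤ i ∧ i - j < l.length then l.getD (i - j) (reg i) else reg i

/-- The (in general non-deterministic) one-step transition relation of `M`. -/
def NStep {A : FOStruct} (M : Machine A) (c c' : Config A) : Prop :=
  ∃ ins, M.prog[c.label]? = some ins ∧
    match ins with
    | Instr.orGoto l₁ l₂ => c' = { c with label := l₁ } ∨ c' = { c with label := l₂ }
    | Instr.nuGuess j =>
        ∃ y ∈ M.oracle, c' = { c with label := c.label + 1, reg := writeFrom c.reg j y.1 }
    | _ => c' = execDet ins c

/-- Reachability of configurations. -/
def Reaches {A : FOStruct} (M : Machine A) : Config A → Config A → Prop :=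
  Relation.ReflTransGen (NStep M)

/-- A configuration is halted if its label is the stop label (or beyond the
program). -/
def Halted {A : FOStruct} (M : Machine A) (c : Config A) : Prop := M.prog.length ≤ c.label

/-- Some computation of `M` starting in `c` reaches the stop instruction. -/
def HaltsFrom {A : FOStruct} (M : Machine A) (c : Config A) : Prop :=
  ∃ c', Reaches M c c' ∧ Halted M c'

/-- The initial configuration for the input tuple `x` (single-valued input
function (I1)): `(1 . (n,1,…,1) . x . (x_n, x_n, …))`. -/
def inputConfig (A : FOStruct) (x : Tup A) : Config A :=
  { label := 0
    idx := fun j => if j = 1 then x.1.length else 1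
    reg := fun i => x.1.getD i (x.1.getLast x.2) }

/-- The initial configuration for input `x` together with a guessed tuple `y`
(multi-valued input function (I3′)): `((n,1,…,1) . x . y . (x_n, x_n, …))`. -/
def inputConfigG (A : FOStruct) (x y : Tup A) : Config A :=
  { label := 0
    idx := fun j => if j = 1 then x.1.length else 1
    reg := fun i => (x.1 ++ y.1).getD i (x.1.getLast x.2) }

/-- The output of a configuration: the tuple `(u_1, …, u_{ν₁})`. -/
def output {A : FOStruct} (c : Config A) : Tup A :=
  ⟨(List.range (max (c.idx 1) 1)).map c.reg, by
    intro hcon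
    have h1 := congrArg List.length hcon
    simp only [List.length_map, List.length_range, List.length_nil] at h1
    omega⟩

/-- All outputs of halting computations of `M` starting in `c`. -/
def ResFrom {A : FOStruct} (M : Machine A) (c : Config A) : Set (Tup A) :=
  { z | ∃ c', Reaches M c c' ∧ Halted M c' ∧ output c' = z }

/-- The result function of `M` (for machines with input function (I1)). -/
def Res {A : FOStruct} (M : Machine A) (x : Tup A) : Set (Tup A) :=
  ResFrom M (inputConfig A x)

/-- Deterministic instructions: neither `orGoto` nor `nuGuess`. -/
def Instr.isDet {A : FOStruct} : Instr A → Prop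
  | .orGoto _ _ => False
  | .nuGuess _ => False
  | _ => True

/-- Instructions allowed in `M_A^{NDB}`-machines: no ν-instructions. -/
def Instr.noNu {A : FOStruct} : Instr A → Prop
  | .nuGuess _ => False
  | _ => True

/-- Instructions allowed in ν-oracle machines: no binary branching. -/
def Instr.noOr {A : FOStruct} : Instr A → Prop
  | .orGoto _ _ => False
  | _ => True

/-- `M` is a deterministic BSS RAM (a machine in `M_A`). -/
def Machine.Det {A : FOStruct} (M : Machine A) : Prop := ∀ ins ∈ M.prog, ins.isDet

/-- `M` is a machine in `M_A^{NDB}` (binary non-deterministic branching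
allowed). -/
def Machine.NDB {A : FOStruct} (M : Machine A) : Prop := ∀ ins ∈ M.prog, ins.noNu

/-- `M` is a ν-oracle machine in `M_A^ν(Q)`. -/
def Machine.NuMach {A : FOStruct} (M : Machine A) (Q : Set (Tup A)) : Prop :=
  (∀ ins ∈ M.prog, ins.noOr) ∧ M.oracle = Q

/-- `SDEC_A`: the class of problems semi-decidable by a deterministic
BSS RAM in `M_A`. -/
def SDEC (A : FOStruct) : Set (Set (Tup A)) :=
  { P | ∃ M : Machine A, M.Det ∧ ∀ x, x ∈ P ↔ HaltsFrom M (inputConfig A x) }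

/-- `DEC_A`: the class of decidable problems. -/
def DEC (A : FOStruct) : Set (Set (Tup A)) :=
  { P | P ∈ SDEC A ∧ Pᶜ ∈ SDEC A }

/-- `SDEC_A^{NDB}`: semi-decidability by machines with binary
non-deterministic branchings. -/
def SDECndb (A : FOStruct) : Set (Set (Tup A)) :=
  { P | ∃ M : Machine A, M.NDB ∧ ∀ x, x ∈ P ↔ HaltsFrom M (inputConfig A x) }

/-- `(SDEC_A^ν)^Q`: semi-decidability by ν-oracle machines with oracle `Q`. -/
def SDECnu (A : FOStruct) (Q : Set (Tup A)) : Set (Set (Tup A)) :=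
  { P | ∃ M : Machine A, M.NuMach Q ∧ ∀ x, x ∈ P ↔ HaltsFrom M (inputConfig A x) }

/-- A tuple is digital (w.r.t. `c₁, c₂`) if all its components are among the
two constants. -/
def Digital {A : FOStruct} (c₁ c₂ : A.U) (y : Tup A) : Prop := ∀ u ∈ y.1, u = c₁ ∨ u = c₂

/-- `SDEC_A^{ND}`: acceptance by machines guessing arbitrary tuples. -/
def SDECnd (A : FOStruct) : Set (Set (Tup A)) :=
  { P | ∃ M : Machine A, M.Det ∧ ∀ x, x ∈ P ↔ ∃ y : Tup A, HaltsFrom M (inputConfigG A x y) }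

/-- `SDEC_A^{DND}`: acceptance by digitally non-deterministic machines whose
guesses range over tuples of the two constants. -/
def SDECdnd (A : FOStruct) (c₁ c₂ : A.U) : Set (Set (Tup A)) :=
  { P | ∃ M : Machine A, M.Det ∧
      ∀ x, x ∈ P ↔ ∃ y : Tup A, Digital c₁ c₂ y ∧ HaltsFrom M (inputConfigG A x y) }

/-- The result function of a machine used non-deterministically with guesses
ranging over all tuples. -/
def ResND {A : FOStruct} (M : Machine A) (x : Tup A) : Set (Tup A) :=
  { z | ∃ y : Tup A, z ∈ ResFrom M (inputConfigG A x y) }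

/-- The result function of a digitally non-deterministic machine. -/
def ResDND {A : FOStruct} (c₁ c₂ : A.U) (M : Machine A) (x : Tup A) : Set (Tup A) :=
  { z | ∃ y : Tup A, Digital c₁ c₂ y ∧ z ∈ ResFrom M (inputConfigG A x y) }

/-- The identity relation `id_{U_A}` viewed as a decision problem
(the set of pairs `(x, x)`). -/
def idSet (A : FOStruct) : Set (Tup A) := { p | ∃ x : A.U, p.1 = [x, x] }

/-- The one-component tuple `(c)`. -/
def singTup (A : FOStruct) (c : A.U) : Tup A := ⟨[c], by simp⟩

/-- The singleton `{c}` viewed as a decision problem. -/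
def singSet (A : FOStruct) (c : A.U) : Set (Tup A) := { p | p.1 = [c] }

/-- The two-element set `{c₁, c₂}` viewed as a decision problem. -/
def constPair (A : FOStruct) (c₁ c₂ : A.U) : Set (Tup A) := { p | p.1 = [c₁] ∨ p.1 = [c₂] }

/-- `{c₁,c₂}^∞`: all finite nonempty tuples over the two constants. -/
def binTups (A : FOStruct) (c₁ c₂ : A.U) : Set (Tup A) := { p | ∀ u ∈ p.1, u = c₁ ∨ u = c₂ }

/-- `{c₁,c₂}²`: all pairs over the two constants. -/
def pairTups (A : FOStruct) (c₁ c₂ : A.U) : Set (Tup A) :=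
  { p | ∃ u v : A.U, (u = c₁ ∨ u = c₂) ∧ (v = c₁ ∨ v = c₂) ∧ p.1 = [u, v] }

open scoped Classical in
/-- The characteristic function `χ_P` with values `c₁` (yes) and `c₂` (no). -/
noncomputable def chi (A : FOStruct) (c₁ c₂ : A.U) (P : Set (Tup A)) (x : Tup A) : Tup A :=
  if x ∈ P then singTup A c₁ else singTup A c₂

/-- `M` (a deterministic BSS RAM) computes the total function `f`. -/
def ComputesFn (A : FOStruct) (M : Machine A) (f : Tup A → Tup A) : Prop :=
  M.Det ∧ ∀ x, Res M x = {f x}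

/-- `A` contains the identity relation `id_{U_A}` among its relations. -/
def HasIdRel (A : FOStruct) : Prop := ∃ r : A.relIdx, ∀ x y : A.U, A.rels r [x, y] ↔ x = y

/-- `c` is a constant of the structure `A`. -/
def HasConst (A : FOStruct) (c : A.U) : Prop := ∃ i : A.constIdx, A.consts i = c

/-- The class of result functions of deterministic machines. -/
def ResClassDet (A : FOStruct) : Set (Tup A → Set (Tup A)) :=
  { f | ∃ M : Machine A, M.Det ∧ f = Res M }

/-- `{Res_M | M ∈ M_A^{NDB}}`. -/
def ResClassNDB (A : FOStruct) : Set (Tup A → Set (Tup A)) :=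
  { f | ∃ M : Machine A, M.NDB ∧ f = Res M }

/-- `{Res_M | M ∈ M_A^ν(Q)}`. -/
def ResClassNu (A : FOStruct) (Q : Set (Tup A)) : Set (Tup A → Set (Tup A)) :=
  { f | ∃ M : Machine A, M.NuMach Q ∧ f = Res M }

/-- `{Res_M | M ∈ M_A^{ND}}`. -/
def ResClassND (A : FOStruct) : Set (Tup A → Set (Tup A)) :=
  { f | ∃ M : Machine A, M.Det ∧ f = ResND M }

/-- `{Res_M | M ∈ M_A^{DND}}`. -/
def ResClassDND (A : FOStruct) (c₁ c₂ : A.U) : Set (Tup A → Set (Tup A)) :=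
  { f | ∃ M : Machine A, M.Det ∧ f = ResDND c₁ c₂ M }

/-- A letter of the two-letter alphabet `{a, b}`. -/
abbrev Letter (α : Type) (a b : α) : Type := { x : α // x = a ∨ x = b }

/-- The universe `{a,b}^ω ∪ {a,b}` of the structure `𝒜₄`. -/
abbrev U4 (α : Type) (a b : α) : Type := (ℕ → Letter α a b) ⊕ Letter α a b

/-- The letter `a`. -/
def aL (α : Type) (a b : α) : Letter α a b := ⟨a, Or.inl rfl⟩

/-- The letter `b`. -/
def bL (α : Type) (a b : α) : Letter α a b := ⟨b, Or.inr rfl⟩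

/-- `head(v̄) = v₁` for `v̄ ∈ {a,b}^ω` and `head(x) = x` for `x ∈ {a,b}`. -/
def headOp {α : Type} {a b : α} : U4 α a b → U4 α a b
  | Sum.inl v => Sum.inr (v 0)
  | Sum.inr x => Sum.inr x

/-- `tail(v̄) = (v₂, v₃, …)` for `v̄ ∈ {a,b}^ω` and `tail(x) = x` for
`x ∈ {a,b}`. -/
def tailOp {α : Type} {a b : α} : U4 α a b → U4 α a b
  | Sum.inl v => Sum.inl (fun n => v (n + 1))
  | Sum.inr x => Sum.inr x

/-- The structure `𝒜₄ = ({a,b}^ω ∪ {a,b}; a, b; head, tail; r₁)` of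
signature `(2;1,1;2)` with `r₁ = {(a,a), (b,b)}`. -/
def A4 (α : Type) (a b : α) : FOStruct :=
  { U := U4 α a b
    constIdx := Fin 2
    consts := fun i => if i = (0 : Fin 2) then Sum.inr (aL α a b) else Sum.inr (bL α a b)
    opIdx := Fin 2
    ops := fun i args =>
      match args with
      | [v] => if i = (0 : Fin 2) then headOp v else tailOp v
      | _ => Sum.inr (aL α a b)
    relIdx := Unit
    rels := fun _ args =>
      args = [Sum.inr (aL α a b), Sum.inr (aL α a b)] ∨
        args = [Sum.inr (bL α a b), Sum.inr (bL α a b)] }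

section A4Aux

variable {α : Type} {a b : α}

/-! ### The relation and the operations of `𝒜₄` -/

theorem A4_rel_iff (r : (A4 α a b).relIdx) (x y : U4 α a b) :
    (A4 α a b).rels r [x, y] ↔ ∃ l, x = Sum.inr l ∧ y = Sum.inr l := by
  change ([x, y] = [Sum.inr (aL α a b), Sum.inr (aL α a b)] ∨
    [x, y] = [Sum.inr (bL α a b), Sum.inr (bL α a b)]) ↔ _
  constructor
  · rintro (h | h) <;> simp only [List.cons.injEq, and_true] at h
    exacts [⟨_, h.1, h.2⟩, ⟨_, h.1, h.2⟩]
  · rintro ⟨⟨l, rfl | rfl⟩, rfl, rfl⟩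
    exacts [Or.inl rfl, Or.inr rfl]

theorem headOp_letter (x : U4 α a b) : ∃ l, headOp x = Sum.inr l := by
  cases x <;> exact ⟨_, rfl⟩

/-! ### Semi-deciding the complement of the identity -/

/-- The relation symbol `r₁`. -/
def relI (α : Type) (a b : α) : (A4 α a b).relIdx := ()

/-- The operation symbol `head`. -/
def headI (α : Type) (a b : α) : (A4 α a b).opIdx := (0 : Fin 2)

/-- The operation symbol `tail`. -/
def tailI (α : Type) (a b : α) : (A4 α a b).opIdx := (1 : Fin 2)

/-- The program accepting the tuples that are not of the form `(x, x)`. Labels `0`–`1` test whether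
the length is `2`, labels `2`–`4` treat the inputs containing a letter (with an endless loop at `3`
on two equal letters), and labels `5`–`10` form the loop comparing two sequences. The stop label is
`11`. -/
def neqProg (α : Type) (a b : α) : List (Instr (A4 α a b)) :=
  [.incIdx 2,
   .branchIdx 1 2 2 11,
   .branchRel (relI α a b) [0, 0] 3 4,
   .branchRel (relI α a b) [0, 1] 3 11,
   .branchRel (relI α a b) [1, 1] 11 5,
   .apply 2 (headI α a b) [0],
   .apply 3 (headI α a b) [1],
   .branchRel (relI α a b) [2, 3] 8 11,
   .apply 0 (tailI α a b) [0],
   .apply 1 (tailI α a b) [1],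
   .branchIdx 0 0 5 5]

/-- The machine with program `neqProg`; its oracle set is irrelevant. -/
def neqMach (α : Type) (a b : α) : Machine (A4 α a b) := ⟨neqProg α a b, ∅⟩

theorem neqMach_det : (neqMach α a b).Det := by
  intro ins h
  simp only [neqMach, neqProg, List.mem_cons, List.not_mem_nil, or_false] at h
  rcases h with h | h | h | h | h | h | h | h | h | h | h <;> subst h <;> trivial

theorem nstep_det {A : FOStruct} {M : Machine A} (hM : M.Det) (c c' : Config A) :
    NStep M c c' ↔ ∃ ins, M.prog[c.label]? = some ins ∧ ins.isDet ∧ c' = execDet ins c := by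
  constructor
  · rintro ⟨ins, h, h'⟩
    have hd := hM ins (List.mem_of_getElem? h)
    refine ⟨ins, h, hd, ?_⟩
    cases ins <;> first | exact h' | exact hd.elim
  · rintro ⟨ins, h, hd, h'⟩
    refine ⟨ins, h, ?_⟩
    cases ins <;> first | exact h' | exact hd.elim

theorem halts_step {A : FOStruct} {M : Machine A} (hM : M.Det) {c : Config A} (ins : Instr A)
    (h : M.prog[c.label]? = some ins) (h' : HaltsFrom M (execDet ins c)) : HaltsFrom M c := by
  obtain ⟨d, hd, hh⟩ := h'
  exact ⟨d, Relation.ReflTransGen.head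
    ((nstep_det hM _ _).2 ⟨ins, h, hM ins (List.mem_of_getElem? h), rfl⟩) hd, hh⟩

/-- A configuration over `𝒜₄`, with registers typed in `U4 α a b` instead of `(A4 α a b).U`. -/
def cfg (l : ℕ) (idx : ℕ → ℕ) (reg : ℕ → U4 α a b) : Config (A4 α a b) := ⟨l, idx, reg⟩

theorem exec_head (l : ℕ) (idx : ℕ → ℕ) (reg : ℕ → U4 α a b) (j i : ℕ) :
    execDet (.apply j (headI α a b) [i]) (cfg l idx reg) =
      cfg (l + 1) idx (Function.update reg j (headOp (reg i))) := rfl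

theorem exec_tail (l : ℕ) (idx : ℕ → ℕ) (reg : ℕ → U4 α a b) (j i : ℕ) :
    execDet (.apply j (tailI α a b) [i]) (cfg l idx reg) =
      cfg (l + 1) idx (Function.update reg j (tailOp (reg i))) := rfl

theorem exec_branchIdx (l : ℕ) (idx : ℕ → ℕ) (reg : ℕ → U4 α a b) (j k l₁ l₂ : ℕ) :
    execDet (.branchIdx j k l₁ l₂) (cfg l idx reg) =
      cfg (if idx j = idx k then l₁ else l₂) idx reg := by
  unfold execDet cfg
  dsimp only

theorem exec_incIdx (l : ℕ) (idx : ℕ → ℕ) (reg : ℕ → U4 α a b) (j : ℕ) :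
    execDet (.incIdx j) (cfg l idx reg) =
      cfg (l + 1) (Function.update idx j (idx j + 1)) reg := rfl

open scoped Classical in
theorem exec_rel (l : ℕ) (idx : ℕ → ℕ) (reg : ℕ → U4 α a b) (i j l₁ l₂ : ℕ) :
    execDet (.branchRel (relI α a b) [i, j] l₁ l₂) (cfg l idx reg) =
      cfg (if ∃ m, reg i = Sum.inr m ∧ reg j = Sum.inr m then l₁ else l₂) idx reg := by
  have h := A4_rel_iff (relI α a b) (reg i) (reg j)
  by_cases hm : ∃ m, reg i = Sum.inr m ∧ reg j = Sum.inr m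
  · rw [if_pos hm]
    exact congrArg (fun l => cfg l idx reg) (if_pos (h.2 hm))
  · rw [if_neg hm]
    exact congrArg (fun l => cfg l idx reg) (if_neg (mt h.1 hm))

theorem halts_final (idx : ℕ → ℕ) (reg : ℕ → U4 α a b) :
    HaltsFrom (neqMach α a b) (cfg 11 idx reg) :=
  ⟨_, Relation.ReflTransGen.refl, le_refl 11⟩

/-- Started at the comparison loop on two sequences that differ at position `n`, the machine
halts. -/
theorem halts_loop (n : ℕ) : ∀ (idx : ℕ → ℕ) (reg : ℕ → U4 α a b) (v w : ℕ → Letter α a b),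
    reg 0 = Sum.inl v → reg 1 = Sum.inl w → v n ≠ w n →
    HaltsFrom (neqMach α a b) (cfg 5 idx reg) := by
  induction n with
  | zero =>
    intro idx reg v w h0 h1 hn
    refine halts_step neqMach_det _ rfl ?_
    rw [exec_head]
    refine halts_step neqMach_det _ rfl ?_
    rw [exec_head]
    refine halts_step neqMach_det _ rfl ?_
    rw [exec_rel, if_neg]
    · exact halts_final _ _
    · rintro ⟨m, e1, e2⟩
      simp only [Function.update, h0, h1, headOp] at e1 e2
      simp at e1 e2
      exact hn (e1.trans e2.symm)
  | succ n ih =>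
    intro idx reg v w h0 h1 hn
    refine halts_step neqMach_det _ rfl ?_
    rw [exec_head]
    refine halts_step neqMach_det _ rfl ?_
    rw [exec_head]
    refine halts_step neqMach_det _ rfl ?_
    rw [exec_rel]
    split_ifs
    · refine halts_step neqMach_det _ rfl ?_
      rw [exec_tail]
      refine halts_step neqMach_det _ rfl ?_
      rw [exec_tail]
      refine halts_step neqMach_det _ rfl ?_
      rw [exec_branchIdx, ite_self]
      refine ih _ _ (fun k => v (k + 1)) (fun k => w (k + 1)) ?_ ?_ hn
      · simp [Function.update, h0, tailOp]
      · simp [Function.update, h1, tailOp]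
    · exact halts_final _ _

theorem halts_of_ne (idx : ℕ → ℕ) (reg : ℕ → U4 α a b) (h : reg 0 ≠ reg 1) :
    HaltsFrom (neqMach α a b) (cfg 2 idx reg) := by
  refine halts_step neqMach_det _ rfl ?_
  rw [exec_rel]
  split_ifs with hx
  · refine halts_step neqMach_det _ rfl ?_
    rw [exec_rel, if_neg]
    · exact halts_final _ _
    · rintro ⟨m, e1, e2⟩
      exact h (e1.trans e2.symm)
  · refine halts_step neqMach_det _ rfl ?_
    rw [exec_rel]
    split_ifs with hy
    · exact halts_final _ _
    · rcases hv : reg 0 with v | l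
      · rcases hw : reg 1 with w | m
        · have hvw : v ≠ w := fun e => h (by rw [hv, hw, e])
          obtain ⟨n, hn⟩ := Function.ne_iff.1 hvw
          exact halts_loop n _ _ v w hv hw hn
        · exact (hy ⟨m, hw, hw⟩).elim
      · exact (hx ⟨l, hv, hv⟩).elim

/-- The invariant of the run of `neqMach` on an input `(x, x)`: the registers `Z₀` and `Z₁` agree
except at label `9`, where only `Z₀` has been replaced by its tail. The remaining clauses record
which tests have already succeeded. -/
structure NeqInv (l : ℕ) (idx : ℕ → ℕ) (reg : ℕ → U4 α a b) : Prop where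
  lt : l < 11
  idx1 : idx 1 = 2
  idx2_start : l = 0 → idx 2 = 1
  idx2 : l ≠ 0 → idx 2 = 2
  eq : l ≠ 9 → reg 0 = reg 1
  eq_tail : l = 9 → reg 0 = tailOp (reg 1)
  letter : l = 3 → ∃ m, reg 1 = Sum.inr m
  not_letter : l = 4 → ¬ ∃ m, reg 1 = Sum.inr m
  head : l = 6 → reg 2 = headOp (reg 1)
  heads : l = 7 → ∃ m, reg 2 = Sum.inr m ∧ reg 3 = Sum.inr m

theorem NeqInv.step {l : ℕ} {idx : ℕ → ℕ} {reg : ℕ → U4 α a b} (hc : NeqInv l idx reg)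
    {c' : Config (A4 α a b)} (h : NStep (neqMach α a b) (cfg l idx reg) c') :
    ∃ l' idx' reg', c' = cfg l' idx' reg' ∧ NeqInv l' idx' reg' := by
  obtain ⟨ins, hins, -, rfl⟩ := (nstep_det neqMach_det _ _).1 h
  obtain ⟨lt, i1, i20, i2, eq, eqt, le, nle, hd, hds⟩ := hc
  simp only [cfg] at hins
  interval_cases l <;> simp only [neqMach, neqProg, List.getElem?_cons_zero,
    List.getElem?_cons_succ, Option.some.injEq] at hins <;> subst hins
  · refine ⟨_, _, _, exec_incIdx _ _ _ _, ?_⟩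
    constructor <;> simp_all [Function.update]
  · refine ⟨_, _, _, exec_branchIdx _ _ _ _ _ _ _, ?_⟩
    constructor <;> simp_all
  · refine ⟨_, _, _, exec_rel _ _ _ _ _ _ _, ?_⟩
    have e := eq (by decide)
    split_ifs with hl
    · obtain ⟨m, hl, -⟩ := hl
      have hm : ∃ m, reg 1 = Sum.inr m := ⟨m, e ▸ hl⟩
      clear hl
      constructor <;> simp_all
    · constructor <;> simp_all
  · refine ⟨_, _, _, exec_rel _ _ _ _ _ _ _, ?_⟩
    have e := eq (by decide)
    obtain ⟨m, hl⟩ := le rfl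
    rw [if_pos ⟨m, e.trans hl, hl⟩]
    constructor <;> simp_all
  · refine ⟨_, _, _, exec_rel _ _ _ _ _ _ _, ?_⟩
    rw [if_neg (fun ⟨m, hl, _⟩ => nle rfl ⟨m, hl⟩)]
    constructor <;> simp_all
  · refine ⟨_, _, _, exec_head _ _ _ _ _, ?_⟩
    constructor <;> simp_all [Function.update]
  · refine ⟨_, _, _, exec_head _ _ _ _ _, ?_⟩
    obtain ⟨m, hl⟩ := headOp_letter (reg 1)
    constructor <;> simp_all [Function.update]
  · refine ⟨_, _, _, exec_rel _ _ _ _ _ _ _, ?_⟩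
    rw [if_pos (hds rfl)]
    constructor <;> simp_all
  · refine ⟨_, _, _, exec_tail _ _ _ _ _, ?_⟩
    constructor <;> simp_all [Function.update]
  · refine ⟨_, _, _, exec_tail _ _ _ _ _, ?_⟩
    constructor <;> simp_all [Function.update]
  · refine ⟨_, _, _, exec_branchIdx _ _ _ _ _ _ _, ?_⟩
    constructor <;> simp_all

theorem not_halts_of_inv {l : ℕ} {idx : ℕ → ℕ} {reg : ℕ → U4 α a b} (hc : NeqInv l idx reg) :
    ¬ HaltsFrom (neqMach α a b) (cfg l idx reg) := by
  rintro ⟨d, hd, hh⟩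
  have hI : ∃ l' idx' reg', d = cfg l' idx' reg' ∧ NeqInv l' idx' reg' := by
    clear hh
    induction hd with
    | refl => exact ⟨_, _, _, rfl, hc⟩
    | tail _ hs ih =>
      obtain ⟨_, _, _, rfl, hi⟩ := ih
      exact hi.step hs
  obtain ⟨l', _, _, rfl, hi⟩ := hI
  exact absurd hi.lt (not_lt.2 hh)

theorem compl_id_mem : (idSet (A4 α a b))ᶜ ∈ SDEC (A4 α a b) := by
  refine ⟨neqMach α a b, neqMach_det, ?_⟩
  rintro ⟨l, hl⟩
  let reg : ℕ → U4 α a b := fun i => l.getD i (l.getLast hl)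
  have hin : inputConfig (A4 α a b) ⟨l, hl⟩ =
      cfg 0 (fun j => if j = 1 then l.length else 1) reg := rfl
  rw [hin]
  constructor
  · intro hx
    refine halts_step neqMach_det _ rfl ?_
    rw [exec_incIdx]
    refine halts_step neqMach_det _ rfl ?_
    rw [exec_branchIdx]
    by_cases h2 : l.length = 2
    · rw [if_pos (by simp [Function.update, h2])]
      refine halts_of_ne _ _ fun h => hx ?_
      obtain ⟨x, y, rfl⟩ := List.length_eq_two.1 h2
      have hxy : x = y := h
      exact ⟨x, congrArg (fun z => [x, z]) hxy.symm⟩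
    · rw [if_neg (by simp [Function.update, h2])]
      exact halts_final _ _
  · rintro hh ⟨x, hx⟩
    simp only at hx
    subst hx
    refine not_halts_of_inv ?_ hh
    constructor <;> (simp [reg]; try rfl)

/-! ### Undecidability of the identity -/

/-- `Close k x y`: `x` and `y` are the same letter, or sequences with the same first `k` entries. -/
def Close (k : ℕ) : U4 α a b → U4 α a b → Prop
  | Sum.inl v, Sum.inl w => ∀ n < k, v n = w n
  | Sum.inr l, Sum.inr m => l = m
  | _, _ => False

theorem Close.refl (k : ℕ) (x : U4 α a b) : Close k x x := by
  cases x <;> simp [Close]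

theorem Close.mono {k m : ℕ} (h : k ≤ m) {x y : U4 α a b} (hxy : Close m x y) : Close k x y := by
  rcases x with v | l <;> rcases y with w | l' <;> simp only [Close] at *
  · exact fun n hn => hxy n (by omega)
  · exact hxy

theorem Close.eq_inr_iff {k : ℕ} {x y : U4 α a b} (h : Close k x y) (l : Letter α a b) :
    x = Sum.inr l ↔ y = Sum.inr l := by
  rcases x with v | l <;> rcases y with w | l' <;> simp_all [Close]

theorem Close.head {k : ℕ} {x y : U4 α a b} (h : Close (k + 1) x y) :
    Close k (headOp x) (headOp y) := by
  rcases x with v | l <;> rcases y with w | l' <;> simp only [Close, headOp] at *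
  · exact h 0 (by omega)
  · exact h

theorem Close.tail {k : ℕ} {x y : U4 α a b} (h : Close (k + 1) x y) :
    Close k (tailOp x) (tailOp y) := by
  rcases x with v | l <;> rcases y with w | l' <;> simp only [Close, tailOp] at *
  · exact fun n hn => h (n + 1) (by omega)
  · exact h

theorem Close.ops {k : ℕ} {reg reg' : ℕ → U4 α a b} (h : ∀ i, Close (k + 1) (reg i) (reg' i))
    (i : Fin 2) (args : List ℕ) :
    Close k ((A4 α a b).ops i (args.map reg)) ((A4 α a b).ops i (args.map reg')) := by
  match args with
  | [] => exact Close.refl k _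
  | [j] =>
    change Close k (if i = (0 : Fin 2) then headOp (reg j) else tailOp (reg j))
      (if i = (0 : Fin 2) then headOp (reg' j) else tailOp (reg' j))
    split_ifs
    exacts [(h j).head, (h j).tail]
  | _ :: _ :: _ => exact Close.refl k _

theorem Close.rels {k : ℕ} {reg reg' : ℕ → U4 α a b} (h : ∀ i, Close k (reg i) (reg' i))
    (r : (A4 α a b).relIdx) (args : List ℕ) :
    (A4 α a b).rels r (args.map reg) ↔ (A4 α a b).rels r (args.map reg') := by
  match args with
  | [] => exact Iff.rfl
  | [j] => simp [A4]
  | [i, j] =>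
    simp only [List.map, A4_rel_iff]
    exact exists_congr fun l => and_congr ((h i).eq_inr_iff l) ((h j).eq_inr_iff l)
  | _ :: _ :: _ :: _ => simp [A4]

theorem Close.update {k : ℕ} {reg reg' : ℕ → U4 α a b} (h : ∀ i, Close (k + 1) (reg i) (reg' i))
    (j : ℕ) {x y : U4 α a b} (hxy : Close k x y) (i : ℕ) :
    Close k (Function.update reg j x i) (Function.update reg' j y i) := by
  by_cases hij : i = j
  · subst hij; simpa using hxy
  · simpa [Function.update_of_ne hij] using (h i).mono (Nat.le_succ k)

/-- Configurations with the same label and index registers and with `k`-close `Z`-registers. -/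
structure CloseConfig (k : ℕ) (c c' : Config (A4 α a b)) : Prop where
  label : c.label = c'.label
  idx : c.idx = c'.idx
  reg : ∀ i, Close k (c.reg i) (c'.reg i)

/-- A single step consumes at most one entry of each sequence. -/
theorem CloseConfig.exec {k : ℕ} {c c' : Config (A4 α a b)} (h : CloseConfig (k + 1) c c')
    (ins : Instr (A4 α a b)) : CloseConfig k (execDet ins c) (execDet ins c') := by
  obtain ⟨lab, idx, reg⟩ := c
  obtain ⟨lab', idx', reg'⟩ := c'
  obtain ⟨h1, h2, h3⟩ := h
  dsimp only at h1 h2 h3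
  subst h1 h2
  have h3' : ∀ i, Close k (reg i) (reg' i) := fun i => (h3 i).mono (Nat.le_succ k)
  cases ins with
  | apply j i args => exact ⟨rfl, rfl, Close.update h3 j (Close.ops h3 i args)⟩
  | const j i => exact ⟨rfl, rfl, Close.update h3 j (Close.refl k _)⟩
  | copy j l => exact ⟨rfl, rfl, Close.update h3 _ (h3' _)⟩
  | branchRel r args l₁ l₂ =>
    refine ⟨?_, rfl, h3'⟩
    have e := propext (Close.rels h3' r args)
    simp only [execDet]
    congr 1
  | _ => exact ⟨rfl, rfl, h3'⟩

/-- Halting is an open condition: it persists for all configurations that are `k`-close to a given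
halting one, where `k` may be taken to be the number of steps of the halting run. -/
theorem halts_of_close {M : Machine (A4 α a b)} (hM : M.Det) {c : Config (A4 α a b)}
    (h : HaltsFrom M c) : ∃ k, ∀ c', CloseConfig k c c' → HaltsFrom M c' := by
  obtain ⟨d, hd, hh⟩ := h
  induction hd using Relation.ReflTransGen.head_induction_on with
  | refl =>
    refine ⟨0, fun c' hc' => ⟨c', Relation.ReflTransGen.refl, ?_⟩⟩
    simpa only [Halted, hc'.label] using hh
  | head hs _ ih =>
    obtain ⟨k, hk⟩ := ih
    obtain ⟨ins, hins, -, rfl⟩ := (nstep_det hM _ _).1 hs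
    refine ⟨k + 1, fun c' hc' => halts_step hM ins ?_ (hk _ (hc'.exec ins))⟩
    rw [← hc'.label, hins]

theorem id_not_mem (hab : a ≠ b) : idSet (A4 α a b) ∉ SDEC (A4 α a b) := by
  rintro ⟨M, hM, hdec⟩
  let v : ℕ → Letter α a b := fun _ => aL α a b
  let p (w : ℕ → Letter α a b) : Tup (A4 α a b) := ⟨[Sum.inl v, Sum.inl w], List.cons_ne_nil _ _⟩
  obtain ⟨k, hk⟩ := halts_of_close hM ((hdec (p v)).1 ⟨Sum.inl v, rfl⟩)
  let w : ℕ → Letter α a b := Function.update v k (bL α a b)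
  have hvw : Close k (Sum.inl v : U4 α a b) (Sum.inl w) := by
    intro n hn
    simp [w, Function.update_of_ne hn.ne]
  have hclose : CloseConfig k (inputConfig _ (p v)) (inputConfig _ (p w)) := by
    refine ⟨rfl, rfl, fun i => ?_⟩
    match i with
    | 0 => exact Close.refl k _
    | 1 => exact hvw
    | _ + 2 => exact hvw
  obtain ⟨x, hx⟩ := (hdec (p w)).2 (hk _ hclose)
  obtain ⟨e1, e2⟩ : (Sum.inl v : U4 α a b) = x ∧ (Sum.inl w : U4 α a b) = x :=
    ⟨(List.cons.inj hx).1, (List.cons.inj (List.cons.inj hx).2).1⟩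
  have e := congrFun (Sum.inl.inj (e1.trans e2.symm)) k
  simp only [v, w, Function.update_self] at e
  exact hab (congrArg Subtype.val e)

end A4Aux

/-- Example: a co-semi-decidable and undecidable identity.
For the structure `𝒜₄` over `{a,b}^ω ∪ {a,b}` (`a ≠ b`): the complement of
the identity relation on the universe is semi-decidable by a BSS RAM in
`M_{𝒜₄}`, but the identity itself is not semi-decidable by any BSS RAM in
`M_{𝒜₄}`. -/
theorem A4_identity_cosemidecidable_not_semidecidable
    (α : Type) (a b : α) (hab : a ≠ b) :
    (idSet (A4 α a b))ᶜ ∈ SDEC (A4 α a b) ∧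
    idSet (A4 α a b) ∉ SDEC (A4 α a b) :=
  ⟨compl_id_mem, id_not_mem hab⟩
end

section
/- Let 𝒜 be any first-order structure. Then SDEC_𝒜 = SDEC_𝒜^{NDB}: a problem P ⊆ U_𝒜^∞ is semi-decidable by a deterministic BSS RAM in M_𝒜 if and only if it is semi-decidable by a non-deterministic BSS RAM in M_𝒜^{NDB} that may additionally execute binary non-deterministic branching instructions 'goto ℓ₁ or goto ℓ₂'. (The guessing of labels can be replaced by a deterministic systematic enumeration, via binary codes, of all initial parts of program paths.) -/
namespace BranchSim

open Function

/-! ### Iteration of a step function -/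

/-- If every state in `D` returns to `D` after a positive number of steps and `D` avoids the
absorbing set `T`, then `T` is never reached from `D`. -/
theorem never_of_recurrent {α : Type*} (f : α → α) (T D : α → Prop)
    (hT : ∀ a, T a → T (f a)) (hDT : ∀ a, D a → ¬ T a)
    (hD : ∀ a, D a → ∃ q, D (f^[q + 1] a)) (k : ℕ) : ∀ a, D a → ¬ T (f^[k] a) := by
  have hTk : ∀ j a, T a → T (f^[j] a) := by
    intro j
    induction j with
    | zero => intro a h; exact h
    | succ j ih => intro a h; exact ih _ (hT _ h)
  induction k using Nat.strong_induction_on with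
  | _ k ih =>
    intro a ha hk
    obtain ⟨q, hq⟩ := hD a ha
    by_cases hle : q + 1 ≤ k
    · refine ih (k - (q + 1)) (by omega) _ hq ?_
      rw [← iterate_add_apply, Nat.sub_add_cancel hle]
      exact hk
    · refine hDT _ hq ?_
      have h := hTk (q + 1 - k) _ hk
      rwa [← iterate_add_apply, Nat.sub_add_cancel (by omega)] at h

/-- The step function of a deterministic machine; halted configurations are fixed. -/
noncomputable def mstep {A : FOStruct} (M : Machine A) (c : Config A) : Config A :=
  match M.prog[c.label]? with
  | some ins => execDet ins c
  | none => c

theorem mstep_of_halted {A : FOStruct} {M : Machine A} {c : Config A} (h : Halted M c) :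
    mstep M c = c := by
  have h' : M.prog[c.label]? = none := List.getElem?_eq_none h
  simp [mstep, h']

theorem nstep_iff_mstep {A : FOStruct} {M : Machine A} (hM : M.Det) (c c' : Config A) :
    NStep M c c' ↔ ¬ Halted M c ∧ c' = mstep M c := by
  unfold NStep Halted mstep
  rcases hins : M.prog[c.label]? with _ | ins
  · have := List.getElem?_eq_none_iff.1 hins
    simp [this]
  · obtain ⟨hl, -⟩ := List.getElem?_eq_some_iff.1 hins
    have hd := hM ins (List.mem_of_getElem? hins)
    cases ins <;> simp_all [Instr.isDet]

theorem haltsFrom_iff_iterate {A : FOStruct} {M : Machine A} (hM : M.Det) (c : Config A) :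
    HaltsFrom M c ↔ ∃ k, Halted M ((mstep M)^[k] c) := by
  constructor
  · rintro ⟨c', hr, hh⟩
    revert hh
    induction hr using Relation.ReflTransGen.head_induction_on with
    | refl => intro hh; exact ⟨0, hh⟩
    | head h _ ih =>
      intro hh
      obtain ⟨k, hk⟩ := ih hh
      rw [((nstep_iff_mstep hM _ _).1 h).2] at hk
      exact ⟨k + 1, hk⟩
  · rintro ⟨k, hk⟩
    induction k generalizing c with
    | zero => exact ⟨c, .refl, hk⟩
    | succ k ih =>
      by_cases hc : Halted M c
      · exact ⟨c, .refl, hc⟩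
      · obtain ⟨c', hr, hh⟩ := ih (mstep M c) hk
        exact ⟨c', .head ((nstep_iff_mstep hM _ _).2 ⟨hc, rfl⟩) hr, hh⟩

/-! ### Flowcharts and their compilation into deterministic machines -/

/-- The contents of the index registers and of the `Z`-registers. -/
@[ext] structure Mem (A : FOStruct) where
  idx : ℕ → ℕ
  reg : ℕ → A.U

/-- Straight-line instructions. -/
inductive Op (A : FOStruct) : Type where
  | apply (j : ℕ) (i : A.opIdx) (args : List ℕ)
  | const (j : ℕ) (i : A.constIdx)
  | copy (j k : ℕ)
  | inc (j : ℕ)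
  | reset (j : ℕ)

variable {A : FOStruct} {Λ : Type}

/-- The effect of a straight-line instruction. -/
def Op.run : Op A → Mem A → Mem A
  | .apply j i args, m => ⟨m.idx, update m.reg j (A.ops i (args.map m.reg))⟩
  | .const j i, m => ⟨m.idx, update m.reg j (A.consts i)⟩
  | .copy j k, m => ⟨m.idx, update m.reg (m.idx j) (m.reg (m.idx k))⟩
  | .inc j, m => ⟨update m.idx j (m.idx j + 1), m.reg⟩
  | .reset j, m => ⟨update m.idx j 1, m.reg⟩

def Op.toInstr : Op A → Instr A
  | .apply j i args => .apply j i args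
  | .const j i => .const j i
  | .copy j k => .copy j k
  | .inc j => .incIdx j
  | .reset j => .resetIdx j

/-- The effect of straight-line code. -/
def runOps : List (Op A) → Mem A → Mem A
  | [], m => m
  | o :: l, m => runOps l (o.run m)

theorem runOps_append (l₁ l₂ : List (Op A)) (m : Mem A) :
    runOps (l₁ ++ l₂) m = runOps l₂ (runOps l₁ m) := by
  induction l₁ generalizing m with
  | nil => rfl
  | cons o l ih => exact ih _

/-- The test at the end of a basic block; the target `none` is the stop instruction. -/
inductive Exit (A : FOStruct) (Λ : Type) : Type where
  | idxEq (j k : ℕ) (t₁ t₂ : Option Λ)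
  | rel (i : A.relIdx) (args : List ℕ) (t₁ t₂ : Option Λ)

/-- An unconditional jump. -/
def Exit.jmp (t : Option Λ) : Exit A Λ := .idxEq 0 0 t t

open scoped Classical in
/-- The outcome of a test. -/
noncomputable def Exit.eval : Exit A Λ → Mem A → Option Λ
  | .idxEq j k t₁ t₂, m => if m.idx j = m.idx k then t₁ else t₂
  | .rel i args t₁ t₂, m => if A.rels i (args.map m.reg) then t₁ else t₂

def Exit.toInstr (lab : Option Λ → ℕ) : Exit A Λ → Instr A
  | .idxEq j k t₁ t₂ => .branchIdx j k (lab t₁) (lab t₂)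
  | .rel i args t₁ t₂ => .branchRel i args (lab t₁) (lab t₂)

/-- A basic block: straight-line code followed by a test. -/
structure Node (A : FOStruct) (Λ : Type) where
  ops : List (Op A)
  exit : Exit A Λ

/-- The step function of a flowchart `F`: one step executes a whole basic block, and
stopped states are fixed. -/
noncomputable def step (F : Λ → Node A Λ) (s : Option Λ × Mem A) : Option Λ × Mem A :=
  match s.1 with
  | none => s
  | some a => ((F a).exit.eval (runOps (F a).ops s.2), runOps (F a).ops s.2)

section Compile

variable (F : Λ → Node A Λ) {n : ℕ} (e : Λ ≃ Fin n) (B : ℕ)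

/-- Every basic block gets `B` consecutive labels; the stop label is the first free one. -/
def lab : Option Λ → ℕ
  | none => B * n
  | some a => B * (e a : ℕ)

/-- The instruction at position `r` of a compiled basic block. -/
def blockInstr (nd : Node A Λ) (r : ℕ) : Instr A :=
  match nd.ops[r]? with
  | some o => o.toInstr
  | none => nd.exit.toInstr (lab e B)

/-- The machine whose instruction with label `B * k + r` is the one at position `r` of the `k`-th
basic block; positions after the final test are filled up with copies of it. -/
def compile : Machine A where
  prog := (List.range (B * n)).map fun q =>
    if h : q / B < n then blockInstr e B (F (e.symm ⟨q / B, h⟩)) (q % B) else .resetIdx 0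
  oracle := ∅

theorem compile_length : (compile F e B).prog.length = B * n := by simp [compile]

theorem compile_det : (compile F e B).Det := by
  intro ins h
  simp only [compile, List.mem_map] at h
  obtain ⟨q, -, rfl⟩ := h
  split
  · unfold blockInstr
    split
    · rename_i o _
      cases o <;> trivial
    · generalize (F _).exit = x
      cases x <;> trivial
  · trivial

theorem lab_add_lt (a : Λ) {r : ℕ} (hr : r < B) : B * (e a : ℕ) + r < B * n := by
  have h : B * ((e a : ℕ) + 1) ≤ B * n := Nat.mul_le_mul_left _ (e a).2
  rw [Nat.mul_add] at h
  omega

theorem compile_get (a : Λ) {r : ℕ} (hr : r < B) :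
    (compile F e B).prog[B * (e a : ℕ) + r]? = some (blockInstr e B (F a) r) := by
  have h1 : (B * (e a : ℕ) + r) / B = e a := by
    rw [Nat.mul_add_div (by omega), Nat.div_eq_of_lt hr, add_zero]
  have h2 : (B * (e a : ℕ) + r) % B = r := by
    rw [Nat.mul_add_mod, Nat.mod_eq_of_lt hr]
  simp [compile, lab_add_lt e B a hr, h1, h2]

/-- The machine configuration at the entry of a basic block. -/
def cfg (s : Option Λ × Mem A) : Config A := ⟨lab e B s.1, s.2.idx, s.2.reg⟩

theorem mstep_iterate_ops (a : Λ) (hB : (F a).ops.length < B) (m : Mem A) (r : ℕ)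
    (hr : r ≤ (F a).ops.length) :
    (mstep (compile F e B))^[r] (cfg e B (some a, m)) =
      ⟨B * (e a : ℕ) + r, (runOps ((F a).ops.take r) m).idx,
        (runOps ((F a).ops.take r) m).reg⟩ := by
  induction r with
  | zero => simp [cfg, lab, runOps]
  | succ r ih =>
    have hr' : r < (F a).ops.length := hr
    rw [iterate_succ_apply', ih (by omega), List.take_succ_eq_append_getElem hr', runOps_append]
    simp only [mstep, compile_get F e B a (r := r) (by omega), blockInstr,
      List.getElem?_eq_getElem hr']
    cases (F a).ops[r] <;> simp [Op.toInstr, execDet, runOps, Op.run, add_assoc]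

theorem mstep_iterate_block (a : Λ) (hB : (F a).ops.length < B) (m : Mem A) :
    (mstep (compile F e B))^[(F a).ops.length + 1] (cfg e B (some a, m)) =
      cfg e B (step F (some a, m)) := by
  rw [iterate_succ_apply', mstep_iterate_ops F e B a hB m _ le_rfl]
  simp only [mstep, compile_get F e B a hB, blockInstr, List.take_length]
  cases h : (F a).exit <;>
    simp only [List.getElem?_eq_none le_rfl, Exit.toInstr, execDet, step, cfg, h, Exit.eval] <;>
    split_ifs <;> rfl

theorem halted_cfg (hB : 0 < B) (s : Option Λ × Mem A) :
    Halted (compile F e B) (cfg e B s) ↔ s.1 = none := by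
  unfold Halted
  rw [compile_length]
  rcases s with ⟨_ | a, m⟩
  · simp [cfg, lab]
  · have := lab_add_lt e B a hB
    simp only [cfg, lab, reduceCtorEq, iff_false]
    omega

/-- Equivalence of the compiled machine with the flowchart. If the flowchart never stops, then the
configurations at block entries that belong to non-stopping states recur forever. -/
theorem compile_halts (hB : ∀ a, (F a).ops.length < B) (hB0 : 0 < B) (s : Option Λ × Mem A) :
    HaltsFrom (compile F e B) (cfg e B s) ↔ ∃ k, ((step F)^[k] s).1 = none := by
  rw [haltsFrom_iff_iterate (compile_det F e B)]
  constructor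
  · rintro ⟨k, hk⟩
    by_contra! hne
    refine never_of_recurrent (mstep (compile F e B)) (Halted (compile F e B))
      (fun c => ∃ s, c = cfg e B s ∧ ∀ k, ((step F)^[k] s).1 ≠ none) ?_ ?_ ?_ k _
      ⟨s, rfl, hne⟩ hk
    · intro c hc
      rwa [mstep_of_halted hc]
    · rintro _ ⟨s, rfl, hs⟩ hh
      exact hs 0 ((halted_cfg F e B hB0 s).1 hh)
    · rintro _ ⟨⟨_ | a, m⟩, rfl, hs⟩
      · exact absurd rfl (hs 0)
      · exact ⟨_, _, mstep_iterate_block F e B a (hB a) m, fun k => hs (k + 1)⟩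
  · rintro ⟨k, hk⟩
    induction k generalizing s with
    | zero => exact ⟨0, (halted_cfg F e B hB0 s).2 hk⟩
    | succ k ih =>
      obtain ⟨k', hk'⟩ := ih _ hk
      rcases s with ⟨_ | a, m⟩
      · exact ⟨0, (halted_cfg F e B hB0 _).2 rfl⟩
      · rw [← mstep_iterate_block F e B a (hB a) m, ← iterate_add_apply] at hk'
        exact ⟨_, hk'⟩

end Compile

/-- Every flowchart with finitely many basic blocks is equivalent to a deterministic machine. -/
theorem exists_machine [Finite Λ] (F : Λ → Node A Λ) (a₀ : Λ) :
    ∃ M : Machine A, M.Det ∧ ∀ c : Config A, c.label = 0 →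
      (HaltsFrom M c ↔ ∃ k, ((step F)^[k] (some a₀, ⟨c.idx, c.reg⟩)).1 = none) := by
  obtain ⟨n, ⟨e₀⟩⟩ := Finite.exists_equiv_fin Λ
  have : NeZero n := ⟨by have := (e₀ a₀).2; omega⟩
  -- The enumeration of the blocks is changed so that the entry block gets label `0`.
  let e := e₀.trans (Equiv.swap (e₀ a₀) 0)
  have he : e a₀ = 0 := by simp [e]
  obtain ⟨B, hB⟩ : ∃ B, ∀ a, (F a).ops.length < B := by
    obtain ⟨b, hb⟩ := (Set.finite_range fun a => (F a).ops.length).bddAbove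
    exact ⟨b + 1, fun a => Nat.lt_succ_of_le (hb ⟨a, rfl⟩)⟩
  refine ⟨compile F e B, compile_det F e B, fun c hc => ?_⟩
  rw [← compile_halts F e B hB ((Nat.zero_le _).trans_lt (hB a₀))]
  have : cfg e B (some a₀, ⟨c.idx, c.reg⟩) = c := by
    cases c
    simp_all [cfg, lab]
  rw [this]

/-! ### The simulating flowchart -/

/-- Blocks used for copying the input (`a…`) and for starting a new round (`r…`). -/
inductive Glob | a0 | a1 | a2 | a3 | r0 | r1 | r2 | r3

instance : Finite Glob :=
  Finite.of_surjective ![Glob.a0, .a1, .a2, .a3, .r0, .r1, .r2, .r3] fun g => by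
    cases g
    exacts [⟨0, rfl⟩, ⟨1, rfl⟩, ⟨2, rfl⟩, ⟨3, rfl⟩, ⟨4, rfl⟩, ⟨5, rfl⟩, ⟨6, rfl⟩, ⟨7, rfl⟩]

/-- Stages of the simulation of one step: `h0`, `h1`, `h2` halve the branching code,
`test b` and `load b` replace the code by its half, and `exec b` executes the simulated
instruction with guessed bit `b`. -/
inductive Stage | h0 | h1 | h2 | test (b : Bool) | load (b : Bool) | exec (b : Bool)

instance : Finite Stage :=
  Finite.of_surjective (α := Fin 3 ⊕ Bool × Fin 3)
    (Sum.elim ![Stage.h0, .h1, .h2] fun b => ![Stage.test b.1, .load b.1, .exec b.1] b.2)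
    fun s => by
      cases s
      exacts [⟨.inl 0, rfl⟩, ⟨.inl 1, rfl⟩, ⟨.inl 2, rfl⟩, ⟨.inr (_, 0), rfl⟩,
        ⟨.inr (_, 1), rfl⟩, ⟨.inr (_, 2), rfl⟩]

/-- The blocks of the flowchart simulating a program of length `n`. The Boolean in
`(l, md, st)` records whether the simulated program has already written to `Z_0`. -/
abbrev Lab (n : ℕ) : Type := Glob ⊕ (Fin n × Bool × Stage)

/-- The register holding the simulated `Z_i`. An indirect `copy` cannot read `Z_0`, so the input
component in `Z_0` cannot be moved away: `Z_0` stays in place until the first write. -/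
def addr (md : Bool) (i : ℕ) : ℕ := if i = 0 ∧ md = false then 0 else 2 * i + 1

/-- The block at which the simulation of the instruction with label `l` starts. -/
def tgt (n l : ℕ) (md : Bool) : Option (Lab n) :=
  if h : l < n then some (.inr (⟨l, h⟩, md, .h0)) else none

/-- The simulation of a single instruction at label `l`. The simulated index register `I_j` is
`I_{j+9}`, its value `v` is stored as `2 * v + 1`. -/
def execNode (n : ℕ) (md b : Bool) (l : ℕ) : Instr A → Node A (Lab n)
  | .apply j i args =>
      ⟨[.apply (2 * j + 1) i (args.map (addr md))], .jmp (tgt n (l + 1) (md || decide (j = 0)))⟩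
  | .const j i => ⟨[.const (2 * j + 1) i], .jmp (tgt n (l + 1) (md || decide (j = 0)))⟩
  | .copy j k => ⟨[.copy (j + 9) (k + 9)], .jmp (tgt n (l + 1) md)⟩
  | .branchRel i args l₁ l₂ =>
      ⟨[], .rel i (args.map (addr md)) (tgt n l₁ md) (tgt n l₂ md)⟩
  | .branchIdx j k l₁ l₂ => ⟨[], .idxEq (j + 9) (k + 9) (tgt n l₁ md) (tgt n l₂ md)⟩
  | .incIdx j => ⟨[.inc (j + 9), .inc (j + 9)], .jmp (tgt n (l + 1) md)⟩
  | .resetIdx j => ⟨[.reset (j + 9), .inc (j + 9), .inc (j + 9)], .jmp (tgt n (l + 1) md)⟩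
  | .orGoto l₁ l₂ => ⟨[], .jmp (tgt n (if b then l₂ else l₁) md)⟩
  | .nuGuess _ => ⟨[], .jmp none⟩

/-- Resets the first `mm` simulated index registers to (the representation of) `1`. -/
def resetOps (mm : ℕ) : List (Op A) :=
  (List.range mm).flatMap fun j => [.reset (j + 9), .inc (j + 9), .inc (j + 9)]

/-- The simulation of the program `p`, whose instructions only use index registers below `mm`.
The registers `I_0, …, I_8` serve as follows: `I_0`, `I_3` are pointers, `I_1` is the input length
at the start, `I_2` becomes `2 * L + 1` for input length `L`, `I_4` bounds the registers
that may have been written, `I_5` is the code of the current round, `I_6` is the rest of this code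
and `I_7`, `I_8` are used for halving it. -/
def chart (p : List (Instr A)) (mm : ℕ) : Lab p.length → Node A (Lab p.length)
  | .inl .a0 => ⟨.inc 1 :: List.replicate (2 * mm + 2) (.inc 4), .jmp (some (.inl .a1))⟩
  | .inl .a1 => ⟨[.inc 2], .idxEq 2 1 (some (.inl .a2)) (some (.inl .a1))⟩
  | .inl .a2 =>
      ⟨[.inc 1, .copy 1 0, .inc 0], .idxEq 0 2 (some (.inl .a3)) (some (.inl .a2))⟩
  | .inl .a3 =>
      ⟨[.inc 2, .inc 3, .copy 3 2, .inc 3, .inc 4, .inc 4],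
        .idxEq 2 1 (some (.inl .r0)) (some (.inl .a3))⟩
  | .inl .r0 =>
      ⟨resetOps mm ++ [.inc 5, .reset 6, .reset 0, .reset 3, .reset 10],
        .jmp (some (.inl .r1))⟩
  | .inl .r1 => ⟨[.inc 10], .idxEq 10 2 (some (.inl .r2)) (some (.inl .r1))⟩
  | .inl .r2 =>
      ⟨[.inc 0, .inc 3, .inc 3, .copy 3 0, .inc 0],
        .idxEq 3 4 (some (.inl .r3)) (some (.inl .r2))⟩
  | .inl .r3 => ⟨[.inc 6], .idxEq 6 5 (tgt p.length 0 false) (some (.inl .r3))⟩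
  | .inr (l, md, .h0) =>
      ⟨[.inc 4, .inc 4, .reset 7, .reset 8], .jmp (some (.inr (l, md, .h1)))⟩
  | .inr (l, md, .h1) =>
      ⟨[.inc 8], .idxEq 8 6 (some (.inr (l, md, .test false))) (some (.inr (l, md, .h2)))⟩
  | .inr (l, md, .h2) =>
      ⟨[.inc 8, .inc 7],
        .idxEq 8 6 (some (.inr (l, md, .test true))) (some (.inr (l, md, .h1)))⟩
  | .inr (l, md, .test b) =>
      ⟨[.reset 6], .idxEq 7 6 (some (.inl .r0)) (some (.inr (l, md, .load b)))⟩
  | .inr (l, md, .load b) =>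
      ⟨[.inc 6], .idxEq 6 7 (some (.inr (l, md, .exec b))) (some (.inr (l, md, .load b)))⟩
  | .inr (l, md, .exec b) => execNode p.length md b l p[l]

/-- Reachability of flowchart states. -/
def Rch (F : Λ → Node A Λ) (s t : Option Λ × Mem A) : Prop := ∃ k, (step F)^[k] s = t

theorem Rch.rfl {F : Λ → Node A Λ} {s : Option Λ × Mem A} : Rch F s s := ⟨0, Eq.refl _⟩

theorem Rch.trans {F : Λ → Node A Λ} {s t u : Option Λ × Mem A} (h₁ : Rch F s t)
    (h₂ : Rch F t u) : Rch F s u := by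
  obtain ⟨k₁, rfl⟩ := h₁
  obtain ⟨k₂, rfl⟩ := h₂
  exact ⟨k₂ + k₁, iterate_add_apply _ _ _ _⟩

theorem Rch.single {F : Λ → Node A Λ} {s t : Option Λ × Mem A} (h : step F s = t) : Rch F s t :=
  ⟨1, h⟩

theorem Rch.head {F : Λ → Node A Λ} {s t : Option Λ × Mem A} (h : Rch F (step F s) t) :
    Rch F s t := (Rch.single (Eq.refl _)).trans h

/-- A block `a` that repeats itself until a test succeeds after the `n`-th pass. -/
theorem Rch.loop {F : Λ → Node A Λ} (a : Λ) (ex : Option Λ) (n : ℕ) (I : ℕ → Mem A → Prop)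
    (hI : ∀ i m, i < n → I i m → I (i + 1) (runOps (F a).ops m) ∧
      (F a).exit.eval (runOps (F a).ops m) = if i + 1 = n then ex else some a)
    (hn : 0 < n) (m : Mem A) (hm : I 0 m) :
    ∃ m', I n m' ∧ Rch F (some a, m) (ex, m') := by
  have key : ∀ j i m, i + (j + 1) = n → I i m → ∃ m', I n m' ∧ Rch F (some a, m) (ex, m') := by
    intro j
    induction j with
    | zero =>
      intro i m hi h
      obtain ⟨h1, h2⟩ := hI i m (by omega) h
      subst hi
      exact ⟨_, h1, .single (by simp [step, h2])⟩
    | succ j ih =>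
      intro i m hi h
      obtain ⟨h1, h2⟩ := hI i m (by omega) h
      obtain ⟨m', hm', hr⟩ := ih (i + 1) _ (by omega) h1
      rw [if_neg (by omega)] at h2
      exact ⟨m', hm', .head (by simpa only [step, h2] using hr)⟩
  exact key (n - 1) 0 m (by omega) hm

/-! ### Copying the input -/

/-- The invariant at the start of every round, for an input of length `L` filling the registers
as `X` does. The even registers hold a permanent copy of the input, and all odd registers above the
bound in `I_4` still hold the last input component. -/
structure Base (X : ℕ → A.U) (L mm N : ℕ) (m : Mem A) : Prop where
  len : m.idx 2 = 2 * L + 1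
  code : m.idx 5 = N
  odd : m.idx 4 % 2 = 1
  geL : 2 * L + 1 ≤ m.idx 4
  geM : 2 * mm + 1 ≤ m.idx 4
  reg0 : m.reg 0 = X 0
  saved : ∀ q, 1 ≤ q → m.reg (2 * q) = X q
  tail : ∀ q, m.idx 4 < 2 * q + 1 → m.reg (2 * q + 1) = X q

theorem runOps_replicate_inc (j k : ℕ) (m : Mem A) :
    runOps (List.replicate k (.inc j)) m = ⟨update m.idx j (m.idx j + k), m.reg⟩ := by
  induction k generalizing m with
  | zero => simp [runOps]
  | succ k ih => simp [List.replicate_succ, runOps, ih, Op.run, add_assoc, add_comm 1]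

section Sim

variable (p : List (Instr A)) (mm : ℕ) (X : ℕ → A.U) (L : ℕ)

/-- From the initial configuration, the flowchart establishes the invariant `Base`. The registers
`Z_1, …, Z_L` are first moved out of the way, because spreading them over the even registers
directly would overwrite unread components. -/
theorem rch_first_round (hL : 1 ≤ L) (hX : ∀ i, L ≤ i → X i = X L) :
    ∃ m, Base X L mm 1 m ∧
      Rch (chart p mm) (some (.inl .a0), ⟨fun j => if j = 1 then L else 1, X⟩)
        (some (.inl .r0), m) := by
  -- `I_2` is counted up to `L + 1`.
  obtain ⟨m₁, h₁, r₁⟩ := Rch.loop (F := chart p mm) (.inl .a1) (some (.inl .a2)) L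
    (fun i m => m.reg = X ∧ m.idx 0 = 1 ∧ m.idx 1 = L + 1 ∧ m.idx 2 = 1 + i ∧ m.idx 3 = 1 ∧
      m.idx 4 = 2 * mm + 3 ∧ m.idx 5 = 1)
    (by
      rintro i m hi ⟨h0, h1, h2, h3, h4, h5, h6⟩
      simp [chart, runOps, Op.run, Exit.eval, *]
      refine ⟨by omega, ?_⟩
      split_ifs <;> first | rfl | omega) hL
    ⟨fun j => if j = 1 then L + 1 else if j = 4 then 2 * mm + 3 else 1, X⟩ (by simp)
  obtain ⟨h0, h1, h2, h3, h4, h5, h6⟩ := h₁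
  -- The registers `Z_1, …, Z_L` are copied to `Z_{L+2}, …, Z_{2L+1}`.
  obtain ⟨m₂, h₂, r₂⟩ := Rch.loop (F := chart p mm) (.inl .a2) (some (.inl .a3)) L
    (fun i m => m.idx 0 = 1 + i ∧ m.idx 1 = L + 1 + i ∧ m.idx 2 = L + 1 ∧ m.idx 3 = 1 ∧
      m.idx 4 = 2 * mm + 3 ∧ m.idx 5 = 1 ∧ (∀ q, q ≤ L + 1 → m.reg q = X q) ∧
      (∀ q, 1 ≤ q → q ≤ i → m.reg (L + 1 + q) = X q) ∧
      ∀ q, L + 1 + i < q → m.reg q = X q)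
    (by
      rintro i m hi ⟨h0, h1, h2, h3, h4, h5, h6, h7, h8⟩
      simp [chart, runOps, Op.run, Exit.eval, *]
      refine ⟨⟨by omega, by omega, ?_, ?_, ?_⟩, ?_⟩
      · intro q hq
        rw [update_of_ne (by omega), h6 q hq]
      · intro q hq hq'
        by_cases hqi : q = i + 1
        · subst hqi
          rw [update_apply, if_pos (by omega), h6 _ (by omega), add_comm]
        · rw [update_of_ne (by omega), h7 q hq (by omega)]
      · intro q hq
        rw [update_of_ne (by omega), h8 q (by omega)]
      · split_ifs <;> first | rfl | omega) hL m₁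
    (by
      refine ⟨h1, by omega, by omega, h4, h5, h6, ?_, ?_, ?_⟩ <;> intros <;>
        first | omega | rw [h0])
  obtain ⟨g0, g1, g2, g3, g4, g5, g6, g7, g8⟩ := h₂
  -- The registers `Z_{L+2}, …, Z_{2L+1}` are copied to `Z_2, Z_4, …, Z_{2L}`. The pass with
  -- number `i` writes to `Z_{2i}`, and `2 * i ≤ L + 1 + i`, so no unread component is lost.
  obtain ⟨m₃, h₃, r₃⟩ := Rch.loop (F := chart p mm) (.inl .a3) (some (.inl .r0)) L
    (fun i m => m.idx 1 = 2 * L + 1 ∧ m.idx 2 = L + 1 + i ∧ m.idx 3 = 1 + 2 * i ∧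
      m.idx 4 = 2 * mm + 3 + 2 * i ∧ m.idx 5 = 1 ∧ m.reg 0 = X 0 ∧
      (∀ q, 1 ≤ q → q ≤ i → m.reg (2 * q) = X q) ∧
      (∀ q, i < q → q ≤ L → m.reg (L + 1 + q) = X q) ∧
      ∀ q, 2 * L + 1 < q → m.reg q = X L)
    (by
      rintro i m hi ⟨h1, h2, h3, h4, h5, h6, h7, h8, h9⟩
      simp [chart, runOps, Op.run, Exit.eval, *]
      refine ⟨⟨by omega, by omega, by omega, ?_, ?_, ?_⟩, ?_⟩
      · intro q hq hq'
        by_cases hqi : q = i + 1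
        · subst hqi
          rw [update_apply, if_pos (by omega), show L + 1 + i + 1 = L + 1 + (i + 1) by omega,
            h8 _ (by omega) (by omega)]
        · rw [update_of_ne (by omega), h7 q hq (by omega)]
      · intro q hq hq'
        rw [update_of_ne (by omega), h8 q (by omega) hq']
      · intro q hq
        rw [update_of_ne (by omega), h9 q hq]
      · split_ifs <;> first | rfl | omega) hL m₂
    (by
      refine ⟨by omega, by omega, g3, g4, g5, g6 0 (by omega), ?_, ?_, ?_⟩
      · intros; omega
      · intro q hq hq'
        exact g7 q hq hq'
      · intro q hq
        rw [g8 q (by omega), hX q (by omega)])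
  obtain ⟨f1, f2, f3, f4, f5, f6, f7, f8, f9⟩ := h₃
  refine ⟨m₃, ⟨by omega, f5, by omega, by omega, by omega, f6, ?_, ?_⟩,
    .head ?_⟩
  · intro q hq
    by_cases hqL : q ≤ L
    · exact f7 q hq hqL
    · rw [f9 _ (by omega), hX q (by omega)]
  · intro q hq
    rw [f9 _ (by omega), hX q (by omega)]
  · have hs : step (chart p mm) (some (.inl .a0), ⟨fun j => if j = 1 then L else 1, X⟩) =
        (some (.inl .a1),
          ⟨fun j => if j = 1 then L + 1 else if j = 4 then 2 * mm + 3 else 1, X⟩) := by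
      simp only [step, chart, runOps, Op.run, runOps_replicate_inc, Exit.jmp, Exit.eval, ite_self]
      congr 2
      funext j
      simp only [update_apply]
      split_ifs <;> simp_all
      omega
    rw [hs]
    exact r₁.trans (r₂.trans r₃)


/-! ### A round of the simulation -/

/-- The simulating memory `m` represents the configuration `c`; `K` is the remaining branching
code, and `c` can still make `d` steps before reaching registers above the bound in `I_4`. -/
structure Rel (d K N : ℕ) (md : Bool) (c : Config A) (m : Mem A) : Prop extends
    Base X L mm N m where
  rest : m.idx 6 = K
  idx : ∀ j, j < mm → m.idx (j + 9) = 2 * c.idx j + 1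
  pos : ∀ j, 1 ≤ c.idx j
  bound : ∀ j, 2 * c.idx j + 1 + 2 * d ≤ m.idx 4
  reg : ∀ i, m.reg (addr md i) = c.reg i

theorem runOps_resetOps (k : ℕ) (m : Mem A) :
    runOps (resetOps k) m = ⟨fun j => if 9 ≤ j ∧ j < k + 9 then 3 else m.idx j, m.reg⟩ := by
  induction k with
  | zero =>
    ext j
    · simp only [resetOps, List.range_zero, List.flatMap_nil, runOps]
      rw [if_neg (by omega)]
    · rfl
  | succ k ih =>
    have : (resetOps (k + 1) : List (Op A)) =
        resetOps k ++ [.reset (k + 9), .inc (k + 9), .inc (k + 9)] := by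
      simp [resetOps, List.range_succ, List.flatMap_append]
    rw [this, runOps_append, ih]
    ext j
    · simp only [runOps, Op.run, update_apply]
      split_ifs <;> first | rfl | omega
    · rfl

/-- A new round restores the initial configuration of the simulated machine and increases the
branching code. -/
theorem rch_round_start (hL : 1 ≤ L) {N : ℕ} (hN : 1 ≤ N) {m : Mem A} (hm : Base X L mm N m) :
    ∃ m', Rel mm X L 0 (N + 1) (N + 1) false ⟨0, fun j => if j = 1 then L else 1, X⟩ m' ∧
      Rch (chart p mm) (step (chart p mm) (some (.inl .r0), m)) (tgt p.length 0 false, m') := by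
  obtain ⟨m₀, hs, b2, b5, b4, b6, b0, b3, b10, bi, breg⟩ :
      ∃ m₀, step (chart p mm) (some (.inl .r0), m) = (some (.inl .r1), m₀) ∧
        m₀.idx 2 = 2 * L + 1 ∧ m₀.idx 5 = N + 1 ∧ m₀.idx 4 = m.idx 4 ∧ m₀.idx 6 = 1 ∧
        m₀.idx 0 = 1 ∧ m₀.idx 3 = 1 ∧ m₀.idx 10 = 1 ∧
        (∀ j, j < mm → j ≠ 1 → m₀.idx (j + 9) = 3) ∧ m₀.reg = m.reg := by
    refine ⟨runOps (chart p mm (.inl .r0)).ops m, by simp [step, chart, Exit.jmp, Exit.eval], ?_⟩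
    have h2 := hm.len
    have h5 := hm.code
    simp [chart, runOps_append, runOps_resetOps, runOps, Op.run, *]
    intro j hj hj1
    simp [*]
  rw [hs]
  -- The simulated register `I_1` gets the representation of the input length.
  obtain ⟨m₁, ⟨c10, ci, creg⟩, r₁⟩ := Rch.loop (F := chart p mm) (.inl .r1)
    (some (.inl .r2)) (2 * L)
    (fun i m' => m'.idx 10 = 1 + i ∧ (∀ j, j ≠ 10 → m'.idx j = m₀.idx j) ∧ m'.reg = m₀.reg)
    (by
      rintro i m' hi ⟨h1, h2, h3⟩
      simp [chart, runOps, Op.run, Exit.eval, *]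
      refine ⟨⟨by omega, ?_⟩, ?_⟩
      · intro j hj
        rw [update_of_ne hj, h2 j hj]
      · split_ifs <;> first | rfl | omega) (by omega) m₀ ⟨b10, fun _ _ => rfl, rfl⟩
  have hodd := hm.odd
  have hgeL := hm.geL
  have hgeM := hm.geM
  -- The odd registers up to the bound in `I_4` are restored from the even ones.
  obtain ⟨m₂, ⟨d0, d3, di, d0r, dev, dlow, dhigh⟩, r₂⟩ := Rch.loop (F := chart p mm) (.inl .r2)
    (some (.inl .r3)) (m.idx 4 / 2)
    (fun i m' => m'.idx 0 = 1 + 2 * i ∧ m'.idx 3 = 1 + 2 * i ∧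
      (∀ j, j ≠ 0 → j ≠ 3 → m'.idx j = m₁.idx j) ∧ m'.reg 0 = X 0 ∧
      (∀ q, 1 ≤ q → m'.reg (2 * q) = X q) ∧
      (∀ q, 1 ≤ q → q ≤ i → m'.reg (2 * q + 1) = X q) ∧
      ∀ q, m.idx 4 < 2 * q + 1 → m'.reg (2 * q + 1) = X q)
    (by
      rintro i m' hi ⟨h1, h2, h3, h4, h5, h6, h7⟩
      have e4 : m'.idx 4 = m.idx 4 := by
        rw [h3 4 (by omega) (by omega), ci 4 (by omega), b4]
      simp [chart, runOps, Op.run, Exit.eval, *]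
      refine ⟨⟨by omega, ?_, ?_, ?_, ?_⟩, ?_⟩
      · intro j hj hj'
        rw [update_of_ne hj, update_of_ne hj', update_of_ne hj, h3 j hj hj']
      · intro q hq
        rw [update_of_ne (by omega), h5 q hq]
      · intro q hq hq'
        by_cases hqi : q = i + 1
        · subst hqi
          rw [update_apply, if_pos (by omega), ← h5 _ hq]
          congr 1
          omega
        · rw [update_of_ne (by omega), h6 q hq (by omega)]
      · intro q hq
        rw [update_of_ne (by omega), h7 q (by omega)]
      · split_ifs <;> first | rfl | omega) (by omega) m₁
    (by
      refine ⟨by rw [ci _ (by omega), b0], by rw [ci _ (by omega), b3], fun _ _ _ => rfl, ?_, ?_,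
        ?_, ?_⟩
      · rw [creg, breg, hm.reg0]
      · rw [creg, breg]
        exact hm.saved
      · intros; omega
      · rw [creg, breg]
        exact hm.tail)
  -- The branching code is loaded.
  obtain ⟨m₃, ⟨e6, ei, ereg⟩, r₃⟩ := Rch.loop (F := chart p mm) (.inl .r3)
    (tgt p.length 0 false) N
    (fun i m' => m'.idx 6 = 1 + i ∧ (∀ j, j ≠ 6 → m'.idx j = m₂.idx j) ∧ m'.reg = m₂.reg)
    (by
      rintro i m' hi ⟨h1, h2, h3⟩
      have h5 : m'.idx 5 = N + 1 := by
        rw [h2 5 (by omega), di 5 (by omega) (by omega), ci 5 (by omega), b5]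
      simp [chart, runOps, Op.run, Exit.eval, *]
      refine ⟨⟨by omega, ?_⟩, ?_⟩
      · intro j hj
        rw [update_of_ne hj, h2 j hj]
      · split_ifs <;> first | rfl | omega) (by omega) m₂
    ⟨by rw [di 6 (by omega) (by omega), ci 6 (by omega), b6], fun _ _ => rfl, rfl⟩
  have keep : ∀ j, j ≠ 0 → j ≠ 3 → j ≠ 6 → m₃.idx j = m₁.idx j := fun j h0 h3 h6 => by
    rw [ei j h6, di j h0 h3]
  have keep' : ∀ j, j ≠ 0 → j ≠ 3 → j ≠ 6 → j ≠ 10 → m₃.idx j = m₀.idx j :=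
    fun j h0 h3 h6 h10 => by rw [keep j h0 h3 h6, ci j h10]
  have k4 : m₃.idx 4 = m.idx 4 := by
    rw [keep' 4 (by omega) (by omega) (by omega) (by omega), b4]
  refine ⟨m₃, ⟨⟨?_, ?_, ?_, ?_, ?_, ?_, ?_, ?_⟩, ?_, ?_, ?_, ?_, ?_⟩, r₁.trans (r₂.trans r₃)⟩
  · rw [keep' 2 (by omega) (by omega) (by omega) (by omega), b2]
  · rw [keep' 5 (by omega) (by omega) (by omega) (by omega), b5]
  · rw [k4, hodd]
  · rw [k4]; exact hgeL
  · rw [k4]; exact hgeM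
  · rw [ereg, d0r]
  · rw [ereg]; exact dev
  · rw [ereg, k4]; exact dhigh
  · rw [e6, add_comm]
  · intro j hj
    by_cases h1 : j = 1
    · subst h1
      rw [keep _ (by omega) (by omega) (by omega), c10]
      simp only [if_true]
      omega
    · rw [keep' _ (by omega) (by omega) (by omega) (by omega), bi j hj h1]
      simp [h1]
  · intro j
    dsimp only
    split_ifs <;> omega
  · intro j
    dsimp only
    rw [k4]
    split_ifs <;> omega
  · intro i
    rw [ereg]
    unfold addr
    by_cases hi : i = 0
    · simp [hi, d0r]
    · rw [if_neg (by simp [hi])]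
      by_cases hle : 2 * i + 1 ≤ m.idx 4
      · exact dlow i (by omega) (by omega)
      · exact dhigh i (by omega)

/-- Halving the branching code `K`: the guessed bit `b` is the parity of `K` and `h` is half of `K`,
rounded up. -/
theorem rch_halve (l : Fin p.length) (md : Bool) (K : ℕ) :
    ∀ (j i : ℕ) (m : Mem A), K = 2 + 2 * i + j → m.idx 8 = 1 + 2 * i → m.idx 7 = 1 + i →
      m.idx 6 = K →
      ∃ m', (∀ q, q ≠ 7 → q ≠ 8 → m'.idx q = m.idx q) ∧ m'.reg = m.reg ∧
        m'.idx 7 = (K + 1) / 2 ∧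
        Rch (chart p mm) (some (.inr (l, md, .h1)), m)
          (some (.inr (l, md, .test (decide (K % 2 = 1)))), m') := by
  intro j
  induction j using Nat.strong_induction_on with
  | _ j ih =>
    intro i m hK h8 h7 h6
    by_cases hj0 : j = 0
    · refine ⟨⟨update m.idx 8 (m.idx 8 + 1), m.reg⟩, ?_, rfl, ?_, .single ?_⟩
      · intro q _ hq
        exact update_of_ne hq _ _
      · change update m.idx 8 (m.idx 8 + 1) 7 = _
        rw [update_of_ne (by omega), h7]
        omega
      · have : decide (K % 2 = 1) = false := by simp; omega
        simp [step, chart, runOps, Op.run, Exit.eval, h8, h6, this]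
        omega
    · have hs : step (chart p mm) (some (.inr (l, md, .h1)), m) =
          (some (.inr (l, md, .h2)), ⟨update m.idx 8 (m.idx 8 + 1), m.reg⟩) := by
        simp [step, chart, runOps, Op.run, Exit.eval, h8, h6]
        omega
      have hs' : step (chart p mm)
          (some (.inr (l, md, .h2)), ⟨update m.idx 8 (m.idx 8 + 1), m.reg⟩) =
          (if j = 1 then some (.inr (l, md, .test true)) else some (.inr (l, md, .h1)),
            ⟨update (update m.idx 8 (3 + 2 * i)) 7 (2 + i), m.reg⟩) := by
        simp [step, chart, runOps, Op.run, Exit.eval, h8, h7, h6]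
        refine ⟨?_, ?_⟩
        · split_ifs <;> first | rfl | omega
        · rw [show 1 + 2 * i + 1 + 1 = 3 + 2 * i by omega, show 1 + i + 1 = 2 + i by omega]
      by_cases hj1 : j = 1
      · refine ⟨⟨update (update m.idx 8 (3 + 2 * i)) 7 (2 + i), m.reg⟩, ?_, rfl, ?_, .head ?_⟩
        · intro q h7 h8
          simp [update_of_ne, h7, h8]
        · simp
          omega
        · have : decide (K % 2 = 1) = true := by simp; omega
          rw [hs, this]
          exact .single (by rw [hs', if_pos hj1])
      · rw [if_neg hj1] at hs'
        obtain ⟨m', g1, g2, g3, g4⟩ := ih (j - 2) (by omega) (i + 1)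
          ⟨update (update m.idx 8 (3 + 2 * i)) 7 (2 + i), m.reg⟩ (by omega)
          (by simp; omega) (by simp; omega) (by simpa using h6)
        refine ⟨m', ?_, g2, g3, ?_⟩
        · intro q h7 h8
          rw [g1 q h7 h8]
          simp [update_of_ne, h7, h8]
        · refine .head ?_
          rw [hs]
          refine .head ?_
          rw [hs']
          exact g4

variable {X L mm}

/-- Changing `I_6`, `I_7`, `I_8` and raising the bound in `I_4` does not affect the represented
configuration. -/
theorem Rel.of_eq {d d' K K' N : ℕ} {md : Bool} {c : Config A} {m m' : Mem A}
    (h : Rel mm X L d K N md c m) (hreg : m'.reg = m.reg) (h4 : m'.idx 4 = m.idx 4 + 2 * d')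
    (h6 : m'.idx 6 = K')
    (hi : ∀ q, q ≠ 4 → q ≠ 6 → q ≠ 7 → q ≠ 8 → m'.idx q = m.idx q) :
    Rel mm X L (d + d') K' N md c m' where
  len := by rw [hi 2 (by omega) (by omega) (by omega) (by omega), h.len]
  code := by rw [hi 5 (by omega) (by omega) (by omega) (by omega), h.code]
  odd := by have := h.odd; omega
  geL := by have := h.geL; omega
  geM := by have := h.geM; omega
  reg0 := by rw [hreg, h.reg0]
  saved := by rw [hreg]; exact h.saved
  tail q hq := by rw [hreg]; exact h.tail q (by omega)
  rest := h6
  idx j hj := by rw [hi _ (by omega) (by omega) (by omega) (by omega), h.idx j hj]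
  pos := h.pos
  bound j := by have := h.bound j; omega
  reg i := by rw [hreg, h.reg]

/-- Before each simulated step, either the code is exhausted and the next round starts, or a bit
is read off and the step is carried out. -/
theorem rch_read_bit (l : Fin p.length) {md : Bool} {K N : ℕ} (hK : 2 ≤ K) {c : Config A}
    {m : Mem A} (h : Rel mm X L 0 K N md c m) :
    (K = 2 → ∃ m', Base X L mm N m' ∧
      Rch (chart p mm) (some (.inr (l, md, .h0)), m) (some (.inl .r0), m')) ∧
    (3 ≤ K → ∃ m', Rel mm X L 1 ((K + 1) / 2) N md c m' ∧
      Rch (chart p mm) (some (.inr (l, md, .h0)), m)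
        (some (.inr (l, md, .exec (decide (K % 2 = 1)))), m')) := by
  have hs : step (chart p mm) (some (.inr (l, md, .h0)), m) = (some (.inr (l, md, .h1)),
      ⟨update (update (update m.idx 4 (m.idx 4 + 2)) 7 1) 8 1, m.reg⟩) := by
    simp [step, chart, runOps, Op.run, Exit.eval, Exit.jmp]
  obtain ⟨m₁, i₁, g₁, h7, r₁⟩ := rch_halve p mm l md K (K - 2) 0
    ⟨update (update (update m.idx 4 (m.idx 4 + 2)) 7 1) 8 1, m.reg⟩ (by omega) (by simp)
    (by simp) (by simpa using h.rest)
  have hs' : step (chart p mm) (some (.inr (l, md, .test (decide (K % 2 = 1)))), m₁) =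
      (if K = 2 then some (.inl .r0) else some (.inr (l, md, .load (decide (K % 2 = 1)))),
        ⟨update m₁.idx 6 1, m₁.reg⟩) := by
    simp [step, chart, runOps, Op.run, Exit.eval, h7]
    split_ifs <;> first | rfl | omega
  have hrel : Rel mm X L 1 1 N md c ⟨update m₁.idx 6 1, m₁.reg⟩ := by
    have := h.of_eq (d' := 1) (K' := 1) (m' := ⟨update m₁.idx 6 1, m₁.reg⟩) g₁
      (by simp [i₁]) (by simp)
      (by
        intro q h4 h6 h7 h8
        simp [update_of_ne, *])
    simpa using this
  constructor
  · intro hK2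
    rw [if_pos hK2] at hs'
    refine ⟨_, hrel.toBase, .head ?_⟩
    rw [hs]
    exact r₁.trans (.single hs')
  · intro hK3
    rw [if_neg (by omega)] at hs'
    obtain ⟨m₂, ⟨e6, ei, ereg⟩, r₂⟩ := Rch.loop (F := chart p mm)
      (.inr (l, md, .load (decide (K % 2 = 1))))
      (some (.inr (l, md, .exec (decide (K % 2 = 1))))) ((K + 1) / 2 - 1)
      (fun i m' => m'.idx 6 = 1 + i ∧ (∀ j, j ≠ 6 → m'.idx j = m₁.idx j) ∧ m'.reg = m₁.reg)
      (by
        rintro i m' hi ⟨e1, e2, e3⟩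
        simp [chart, runOps, Op.run, Exit.eval, *]
        refine ⟨⟨by omega, ?_⟩, ?_⟩
        · intro j hj
          rw [update_of_ne hj, e2 j hj]
        · split_ifs <;> first | rfl | omega) (by omega) ⟨update m₁.idx 6 1, m₁.reg⟩
      ⟨by simp, fun j hj => by simp [hj], rfl⟩
    refine ⟨m₂, ?_, .head ?_⟩
    · have := hrel.of_eq (d' := 0) (K' := (K + 1) / 2) (m' := m₂) ereg
        (by simp [ei]) (by omega)
        (by
          intro q h4 h6 h7 h8
          simp [update_of_ne, *])
      simpa using this
    · rw [hs]
      refine r₁.trans (.head ?_)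
      rw [hs']
      exact r₂

/-! ### Simulation of one step -/

/-- The effect of an instruction when a non-deterministic branching takes its second label iff
`b = true`. -/
noncomputable def execBit (b : Bool) (ins : Instr A) (c : Config A) : Config A :=
  match ins with
  | .orGoto l₁ l₂ => { c with label := if b then l₂ else l₁ }
  | ins => execDet ins c

theorem nstep_iff_execBit {M : Machine A} (hM : M.NDB) (c c' : Config A) :
    NStep M c c' ↔ ∃ ins, M.prog[c.label]? = some ins ∧ ∃ b, c' = execBit b ins c := by
  unfold NStep
  refine exists_congr fun ins => and_congr_right fun h => ?_
  have := hM ins (List.mem_of_getElem? h)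
  cases ins <;> simp_all [execBit, Instr.noNu]

/-- A strict bound on the index registers occurring in an instruction and on the explicitly given
target register. -/
def instrBound : Instr A → ℕ
  | .apply j _ _ => j + 1
  | .const j _ => j + 1
  | .copy j k => j + k + 1
  | .branchIdx j k _ _ => j + k + 1
  | .incIdx j => j + 1
  | .resetIdx j => j + 1
  | _ => 0

/-- Writing to the simulated register `Z_v`. -/
theorem Rel.write {d K N : ℕ} {md : Bool} {c : Config A} {m : Mem A}
    (h : Rel mm X L d K N md c m) (v : ℕ) (hv : 2 * v + 1 ≤ m.idx 4) (u : A.U) (l : ℕ) :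
    Rel mm X L d K N (md || decide (v = 0)) ⟨l, c.idx, update c.reg v u⟩
      ⟨m.idx, update m.reg (2 * v + 1) u⟩ where
  len := h.len
  code := h.code
  odd := h.odd
  geL := h.geL
  geM := h.geM
  reg0 := by rw [← h.reg0]; exact update_of_ne (show 0 ≠ 2 * v + 1 by omega) u m.reg
  saved q hq := by rw [← h.saved q hq]; exact update_of_ne (show 2 * q ≠ 2 * v + 1 by omega) _ _
  tail q hq := by
    have hq' : m.idx 4 < 2 * q + 1 := hq
    rw [← h.tail q hq']
    exact update_of_ne (show 2 * q + 1 ≠ 2 * v + 1 by omega) _ _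
  rest := h.rest
  idx := h.idx
  pos := h.pos
  bound := h.bound
  reg i := by
    have hi := h.reg i
    dsimp only
    by_cases hiv : i = v
    · subst hiv
      have : addr (md || decide (i = 0)) i = 2 * i + 1 := by
        by_cases h0 : i = 0 <;> simp [addr, h0]
      rw [this]
      simp
    · rw [update_of_ne hiv, ← hi]
      have : addr (md || decide (v = 0)) i ≠ 2 * v + 1 := by
        unfold addr
        split_ifs <;> omega
      rw [update_of_ne this]
      by_cases h0 : i = 0
      · have hv0 : v ≠ 0 := by omega
        simp [hv0]
      · simp [addr, h0]

theorem Rel.weaken {d d' K N : ℕ} {md : Bool} {c : Config A} {m : Mem A}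
    (h : Rel mm X L d K N md c m) (hd : d' ≤ d) (l : ℕ) :
    Rel mm X L d' K N md { c with label := l } m :=
  { h with bound := fun j => by have := h.bound j; dsimp only; omega }

/-- Writing to the simulated index register `I_j`. -/
theorem Rel.setIdx {K N : ℕ} {md : Bool} {c : Config A} {m m' : Mem A}
    (h : Rel mm X L 1 K N md c m) (j v l : ℕ) (hv : 1 ≤ v) (hv' : v ≤ c.idx j + 1)
    (hm' : m' = ⟨update m.idx (j + 9) (2 * v + 1), m.reg⟩) :
    Rel mm X L 0 K N md ⟨l, update c.idx j v, c.reg⟩ m' := by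
  subst hm'
  have hne : ∀ k, k < 9 → update m.idx (j + 9) (2 * v + 1) k = m.idx k := fun k hk =>
    update_of_ne (by omega) _ _
  refine ⟨⟨?_, ?_, ?_, ?_, ?_, h.reg0, h.saved, ?_⟩, ?_, ?_, ?_, ?_, h.reg⟩
  · exact (hne 2 (by omega)).trans h.len
  · exact (hne 5 (by omega)).trans h.code
  · dsimp only
    rw [hne 4 (by omega)]
    exact h.odd
  · dsimp only
    rw [hne 4 (by omega)]
    exact h.geL
  · dsimp only
    rw [hne 4 (by omega)]
    exact h.geM
  · dsimp only
    rw [hne 4 (by omega)]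
    exact h.tail
  · exact (hne 6 (by omega)).trans h.rest
  · intro k hk
    have := h.idx k hk
    simp only [update_apply, Nat.add_right_cancel_iff]
    split_ifs <;> simp_all
  · intro k
    have := h.pos k
    simp only [update_apply]
    split_ifs <;> omega
  · intro k
    have := h.bound k
    have := h.bound j
    dsimp only
    rw [hne 4 (by omega)]
    simp only [update_apply]
    split_ifs <;> omega

theorem Rel.map_reg {d K N : ℕ} {md : Bool} {c : Config A} {m : Mem A}
    (h : Rel mm X L d K N md c m) (args : List ℕ) :
    (args.map (addr md)).map m.reg = args.map c.reg := by
  rw [List.map_map]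
  exact List.map_congr_left fun i _ => h.reg i

/-- The block for a simulated instruction has the effect of this instruction. -/
theorem exec_rel (n : ℕ) {md : Bool} {K N : ℕ} (b : Bool) (ins : Instr A)
    (hins : instrBound ins ≤ mm) (hnu : ins.noNu) {c : Config A} {m : Mem A}
    (h : Rel mm X L 1 K N md c m) :
    ∃ md' m', Rel mm X L 0 K N md' (execBit b ins c) m' ∧
      ((execNode n md b c.label ins).exit.eval (runOps (execNode n md b c.label ins).ops m),
        runOps (execNode n md b c.label ins).ops m) =
        (tgt n (execBit b ins c).label md', m') := by
  have hM := h.geM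
  cases ins with
  | apply j i args =>
    simp only [instrBound] at hins
    refine ⟨_, _, (h.write j (by omega) (A.ops i (args.map c.reg)) (c.label + 1)).weaken
      (zero_le_one) _, ?_⟩
    simp [execNode, runOps, Op.run, Exit.jmp, Exit.eval, execBit, execDet, ← h.map_reg]
  | const j i =>
    simp only [instrBound] at hins
    refine ⟨_, _, (h.write j (by omega) (A.consts i) (c.label + 1)).weaken
      (zero_le_one) _, ?_⟩
    simp [execNode, runOps, Op.run, Exit.jmp, Exit.eval, execBit, execDet]
  | copy j k =>
    simp only [instrBound] at hins
    have hb := h.bound j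
    have hj := h.pos j
    have hk := h.pos k
    have := (h.write (c.idx j) (by omega) (c.reg (c.idx k)) (c.label + 1)).weaken
      (zero_le_one) (c.label + 1)
    rw [show decide (c.idx j = 0) = false by simp; omega, Bool.or_false] at this
    refine ⟨_, _, this, ?_⟩
    have hr := h.reg (c.idx k)
    rw [addr, if_neg (by omega)] at hr
    simp [execNode, runOps, Op.run, Exit.jmp, Exit.eval, execBit, execDet,
      h.idx j (by omega), h.idx k (by omega), hr]
  | branchRel i args l₁ l₂ =>
    refine ⟨md, m, h.weaken zero_le_one _, ?_⟩
    simp only [execNode, runOps, Exit.eval, execBit, execDet]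
    by_cases hr : A.rels i (args.map c.reg)
    · have hr' : A.rels i ((args.map (addr md)).map m.reg) := by rwa [h.map_reg]
      rw [if_pos hr', if_pos hr]
    · have hr' : ¬ A.rels i ((args.map (addr md)).map m.reg) := by rwa [h.map_reg]
      rw [if_neg hr', if_neg hr]
  | branchIdx j k l₁ l₂ =>
    simp only [instrBound] at hins
    refine ⟨md, m, h.weaken zero_le_one _, ?_⟩
    simp only [execNode, runOps, Exit.eval, h.idx j (by omega), h.idx k (by omega), execBit,
      execDet]
    by_cases hjk : c.idx j = c.idx k
    · simp [hjk]
    · rw [if_neg (by omega), if_neg hjk]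
  | incIdx j =>
    simp only [instrBound] at hins
    refine ⟨md, _, h.setIdx j (c.idx j + 1) (c.label + 1) (by omega) le_rfl rfl, ?_⟩
    simp [execNode, runOps, Op.run, Exit.jmp, Exit.eval, execBit, execDet,
      h.idx j (by omega)]
    congr 1
  | resetIdx j =>
    refine ⟨md, _, h.setIdx j 1 (c.label + 1) le_rfl (by omega) rfl, ?_⟩
    simp [execNode, runOps, Op.run, Exit.jmp, Exit.eval, execBit, execDet]
  | orGoto l₁ l₂ =>
    refine ⟨md, m, h.weaken zero_le_one _, ?_⟩
    simp [execNode, runOps, Exit.jmp, Exit.eval, execBit]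
  | nuGuess j => exact hnu.elim

/-! ### Soundness and completeness of the simulation -/

/-- The simulation of one step with a code `K ≥ 3`. -/
theorem rch_step (hp : ∀ ins ∈ p, instrBound ins ≤ mm ∧ ins.noNu) {md : Bool} {K N : ℕ}
    (hK : 3 ≤ K) {c : Config A} {ins : Instr A} (hc : p[c.label]? = some ins) {m : Mem A}
    (h : Rel mm X L 0 K N md c m) :
    ∃ md' m', Rel mm X L 0 ((K + 1) / 2) N md' (execBit (decide (K % 2 = 1)) ins c) m' ∧
      Rch (chart p mm) (tgt p.length c.label md, m)
        (tgt p.length (execBit (decide (K % 2 = 1)) ins c).label md', m') := by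
  obtain ⟨hl, hget⟩ := List.getElem?_eq_some_iff.1 hc
  obtain ⟨m₁, h₁, r₁⟩ := (rch_read_bit p ⟨c.label, hl⟩ (by omega) h).2 hK
  obtain ⟨hb, hnu⟩ := hp ins (List.mem_of_getElem? hc)
  obtain ⟨md', m', h', hs⟩ := exec_rel p.length (decide (K % 2 = 1)) ins hb hnu h₁
  refine ⟨md', m', h', ?_⟩
  rw [tgt, dif_pos hl]
  refine r₁.trans (.single ?_)
  rw [← hs, ← hget]
  rfl

/-- Every simulated run either stops because it has found an accepting path, or its code is
exhausted and the next round starts. -/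
theorem run_sound (M : Machine A) (hM : M.NDB) (hp : ∀ ins ∈ M.prog, instrBound ins ≤ mm)
    {N : ℕ} (K : ℕ) : ∀ (_ : 2 ≤ K) (md : Bool) (c : Config A) (m : Mem A),
      Rel mm X L 0 K N md c m →
        (HaltsFrom M c ∧
          ∃ m', Rch (chart M.prog mm) (tgt M.prog.length c.label md, m) (none, m')) ∨
        ∃ m', Base X L mm N m' ∧
          Rch (chart M.prog mm) (tgt M.prog.length c.label md, m) (some (.inl .r0), m') := by
  induction K using Nat.strong_induction_on with
  | _ K ih =>
    intro hK md c m h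
    rcases hins : M.prog[c.label]? with _ | ins
    · have hle := List.getElem?_eq_none_iff.1 hins
      refine .inl ⟨⟨c, .refl, hle⟩, m, ?_⟩
      rw [tgt, dif_neg (Nat.not_lt.2 hle)]
      exact .rfl
    · obtain ⟨hl, -⟩ := List.getElem?_eq_some_iff.1 hins
      by_cases hK3 : 3 ≤ K
      · obtain ⟨md', m', h', r'⟩ := rch_step M.prog (fun i hi => ⟨hp i hi, hM i hi⟩) hK3 hins h
        rcases ih _ (by omega) (by omega) _ _ _ h' with ⟨⟨c', hr, hh⟩, m'', r''⟩ | ⟨m'', hb, r''⟩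
        · exact .inl ⟨⟨c', .head ((nstep_iff_execBit hM _ _).2 ⟨ins, hins, _, rfl⟩) hr, hh⟩,
            m'', r'.trans r''⟩
        · exact .inr ⟨m'', hb, r'.trans r''⟩
      · obtain ⟨m', hb, r'⟩ := (rch_read_bit M.prog ⟨c.label, hl⟩ hK h).1 (by omega)
        refine .inr ⟨m', hb, ?_⟩
        rwa [tgt, dif_pos hl]

/-- Every accepting path has a code. -/
theorem run_complete (M : Machine A) (hM : M.NDB) (hp : ∀ ins ∈ M.prog, instrBound ins ≤ mm)
    {c : Config A} (hc : HaltsFrom M c) :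
    ∃ K, 2 ≤ K ∧ ∀ (N : ℕ) (md : Bool) (m : Mem A), Rel mm X L 0 K N md c m →
      ∃ m', Rch (chart M.prog mm) (tgt M.prog.length c.label md, m) (none, m') := by
  obtain ⟨c', hr, hh⟩ := hc
  induction hr using Relation.ReflTransGen.head_induction_on with
  | refl =>
    refine ⟨2, le_rfl, fun N md m _ => ⟨m, ?_⟩⟩
    rw [tgt, dif_neg (Nat.not_lt.2 hh)]
    exact .rfl
  | head hs _ ih =>
    obtain ⟨ins, hins, b, rfl⟩ := (nstep_iff_execBit hM _ _).1 hs
    obtain ⟨K, hK, ih⟩ := ih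
    -- `2 * K` and `2 * K - 1` are the codes whose rounded-up half is `K`.
    obtain ⟨K', hK3, hhalf, hbit⟩ :
        ∃ K', 3 ≤ K' ∧ (K' + 1) / 2 = K ∧ decide (K' % 2 = 1) = b := by
      cases b
      · exact ⟨2 * K, by omega, by omega, by simp⟩
      · exact ⟨2 * K - 1, by omega, by omega, by simp; omega⟩
    refine ⟨K', by omega, fun N md m h => ?_⟩
    obtain ⟨md', m', h', r'⟩ := rch_step M.prog (fun i hi => ⟨hp i hi, hM i hi⟩) hK3 hins h
    rw [hhalf, hbit] at h'
    rw [hbit] at r'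
    obtain ⟨m'', r''⟩ := ih _ _ _ h'
    exact ⟨m'', r'.trans r''⟩

end Sim

/-- The flowchart stops on exactly the inputs accepted by the simulated machine. -/
theorem chart_halts_iff (M : Machine A) (hM : M.NDB) {mm : ℕ}
    (hp : ∀ ins ∈ M.prog, instrBound ins ≤ mm) (x : Tup A) :
    HaltsFrom M (inputConfig A x) ↔
      ∃ k, ((step (chart M.prog mm))^[k]
        (some (.inl .a0), ⟨(inputConfig A x).idx, (inputConfig A x).reg⟩)).1 = none := by
  have hL : 1 ≤ x.1.length := List.length_pos_iff.2 x.2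
  have hX : ∀ i, x.1.length ≤ i →
      (inputConfig A x).reg i = (inputConfig A x).reg x.1.length := by
    intro i hi
    simp only [inputConfig]
    rw [List.getD_eq_default _ _ hi, List.getD_eq_default _ _ le_rfl]
  obtain ⟨m₁, b₁, r₁⟩ := rch_first_round M.prog mm (inputConfig A x).reg x.1.length hL hX
  have rnd : ∀ N m, 1 ≤ N → Base (inputConfig A x).reg x.1.length mm N m →
      ∃ m', Rel mm (inputConfig A x).reg x.1.length 0 (N + 1) (N + 1) false
        (inputConfig A x) m' ∧
        Rch (chart M.prog mm) (step (chart M.prog mm) (some (.inl .r0), m))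
          (tgt M.prog.length 0 false, m') :=
    fun N m hN hb => rch_round_start M.prog mm _ _ hL hN hb
  constructor
  · intro hacc
    obtain ⟨K, hK, hrun⟩ := run_complete (X := (inputConfig A x).reg) (L := x.1.length)
      (mm := mm) M hM hp hacc
    by_contra! hne
    have hne' : ∀ m', ¬ Rch (chart M.prog mm) (some (.inl .a0), ⟨(inputConfig A x).idx,
        (inputConfig A x).reg⟩) (none, m') := by
      rintro m' ⟨k, hk⟩
      exact hne k (by rw [hk])
    have hround : ∀ N, ∃ m, Base (inputConfig A x).reg x.1.length mm (N + 1) m ∧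
        Rch (chart M.prog mm) (some (.inl .a0), ⟨(inputConfig A x).idx,
          (inputConfig A x).reg⟩) (some (.inl .r0), m) := by
      intro N
      induction N with
      | zero => exact ⟨m₁, b₁, r₁⟩
      | succ N ih =>
        obtain ⟨m, hb, hr⟩ := ih
        obtain ⟨m', h', r'⟩ := rnd _ m (by omega) hb
        rcases run_sound M hM hp _ (by omega) _ _ _ h' with ⟨-, m'', r''⟩ | ⟨m'', hb'', r''⟩
        · exact absurd (hr.trans (.head (r'.trans r''))) (hne' m'')
        · exact ⟨m'', hb'', hr.trans (.head (r'.trans r''))⟩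
    obtain ⟨m, hb, hr⟩ := hround (K - 2)
    obtain ⟨m', h', r'⟩ := rnd _ m (by omega) hb
    rw [show K - 2 + 1 + 1 = K by omega] at h'
    obtain ⟨m'', r''⟩ := hrun _ _ _ h'
    exact hne' m'' (hr.trans (.head (r'.trans r'')))
  · rintro ⟨k, hk⟩
    by_contra hna
    -- Without an accepting path, block `r0` is reached again and again.
    refine never_of_recurrent (step (chart M.prog mm)) (fun s => s.1 = none)
      (fun s => s = (some (.inl .a0), ⟨(inputConfig A x).idx, (inputConfig A x).reg⟩) ∨
        ∃ N m, 1 ≤ N ∧ Base (inputConfig A x).reg x.1.length mm N m ∧ s = (some (.inl .r0), m))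
      ?_ ?_ ?_ k _ (.inl rfl) hk
    · rintro ⟨_ | a, m⟩ h
      · rfl
      · simp at h
    · rintro _ (rfl | ⟨N, m, -, -, rfl⟩) <;> simp
    · rintro _ (rfl | ⟨N, m, hN, hb, rfl⟩)
      · obtain ⟨_ | k₁, hk₁⟩ := r₁
        · simp at hk₁
        · exact ⟨k₁, .inr ⟨1, m₁, le_rfl, b₁, hk₁⟩⟩
      · obtain ⟨m', h', r'⟩ := rnd N m hN hb
        rcases run_sound M hM hp _ (by omega) _ _ _ h' with ⟨hacc, -⟩ | ⟨m'', hb'', r''⟩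
        · exact absurd hacc hna
        · obtain ⟨k₁, hk₁⟩ := r'.trans r''
          exact ⟨k₁, .inr ⟨N + 1, m'', by omega, hb'', hk₁⟩⟩

end BranchSim

/-- Theorem: Replacing the guessing of labels.
For any first-order structure `A`, `SDEC_A = SDEC_A^{NDB}`: a problem is
semi-decidable by a deterministic BSS RAM iff it is semi-decidable by a
machine that may additionally execute binary non-deterministic branching
instructions `goto ℓ₁ or goto ℓ₂`. -/
theorem sdec_eq_sdec_ndb (A : FOStruct) : SDEC A = SDECndb A := by
  ext P
  constructor
  · rintro ⟨M, hM, hP⟩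
    refine ⟨M, fun ins h => ?_, hP⟩
    have := hM ins h
    cases ins <;> trivial
  · rintro ⟨M, hM, hP⟩
    have hb : ∀ ins ∈ M.prog, BranchSim.instrBound ins ≤ (M.prog.map BranchSim.instrBound).sum :=
      fun ins h => List.le_sum_of_mem (List.mem_map_of_mem h)
    obtain ⟨M', hM', h'⟩ := BranchSim.exists_machine
      (BranchSim.chart M.prog (M.prog.map BranchSim.instrBound).sum) (.inl .a0)
    refine ⟨M', hM', fun x => ?_⟩
    rw [hP x, BranchSim.chart_halts_iff M hM hb x, h' _ rfl]
end
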